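/- arXiv:1301.6211 — 2 statements merged into one kernel-verified Lean document; each statement's English description precedes it below -/
import Mathlib

section
/- Fix 1/3 < θ < 1 and 0 < ε < θ, and set G = T^θ. Define w : ℝ → ℂ by w(y) = ∫_ℝ e^{−u²}(Gu + T)·e^{2πi y u} du. Then for every A > 0 there exist constants C > 0 and T₀ > 0 (depending only on θ, ε, A) such that for all T ≥ T₀ and all real x with 0 < x < G·T^{1−ε} one has |∫_ℝ cos(2πTy/G + x·cosh(πy/G))·w(y) dy| ≤ C·G·(max{G/T, 1/G})^A; in particular the integral is O_A(T^{−A}). -/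
open Real MeasureTheory

theorem abs_sinh_le_two_mul_abs {t : ℝ} (ht : |t| ≤ 1) : |sinh t| ≤ 2 * |t| := by
  have h₁ := abs_exp_sub_one_le ht
  have h₂ := abs_exp_sub_one_le (x := -t) (by rwa [abs_neg])
  rw [abs_neg] at h₂
  rw [sinh_eq]
  rw [abs_le] at h₁ h₂ ⊢
  constructor <;> linarith [h₁.1, h₁.2, h₂.1, h₂.2]

/-- The entire function `z ^ k * exp (-π²z²) * exp (i (α z + x cosh (β z)))`. -/
noncomputable def gaussianPhase (k : ℕ) (α β x : ℝ) (z : ℂ) : ℂ :=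
  z ^ k * Complex.exp (-(π : ℂ) ^ 2 * z ^ 2 +
    Complex.I * ((α : ℂ) * z + (x : ℂ) * Complex.cosh ((β : ℂ) * z)))

theorem differentiable_gaussianPhase (k : ℕ) (α β x : ℝ) :
    Differentiable ℂ (gaussianPhase k α β x) := by
  have h : Differentiable ℂ fun z : ℂ => Complex.cosh ((β : ℂ) * z) :=
    Complex.differentiable_cosh.comp (differentiable_id.const_mul (β : ℂ))
  unfold gaussianPhase
  fun_prop

theorem norm_gaussianPhase (k : ℕ) (α β x y s : ℝ) :
    ‖gaussianPhase k α β x (y + s * Complex.I)‖ =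
      ‖(y : ℂ) + s * Complex.I‖ ^ k *
        exp (-π ^ 2 * (y ^ 2 - s ^ 2) - (α * s + x * (sinh (β * y) * sin (β * s)))) := by
  have hc : Complex.cosh ((β : ℂ) * (y + s * Complex.I)) =
      ((cosh (β * y) * cos (β * s) : ℝ) : ℂ) +
        ((sinh (β * y) * sin (β * s) : ℝ) : ℂ) * Complex.I := by
    rw [mul_add, ← mul_assoc, Complex.cosh_add, Complex.cosh_mul_I, Complex.sinh_mul_I]
    push_cast
    ring
  have he : -(π : ℂ) ^ 2 * (y + s * Complex.I) ^ 2 + Complex.I * ((α : ℂ) * (y + s * Complex.I) +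
        (x : ℂ) * Complex.cosh ((β : ℂ) * (y + s * Complex.I))) =
      ((-π ^ 2 * (y ^ 2 - s ^ 2) - (α * s + x * (sinh (β * y) * sin (β * s))) : ℝ) : ℂ) +
        ((-2 * π ^ 2 * y * s + α * y + x * (cosh (β * y) * cos (β * s)) : ℝ) : ℂ)
          * Complex.I := by
    rw [hc]
    push_cast
    linear_combination (-(π : ℂ) ^ 2 * s ^ 2 + α * s +
      x * (Complex.sinh (β * y) * Complex.sin (β * s))) * Complex.I_sq
  rw [gaussianPhase, norm_mul, norm_pow, Complex.norm_exp, he]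
  simp only [Complex.add_re, Complex.ofReal_re, Complex.re_ofReal_mul, Complex.I_re, mul_zero, add_zero]

theorem norm_gaussianPhase_ofReal (k : ℕ) (α β x y : ℝ) :
    ‖gaussianPhase k α β x y‖ = |y| ^ k * exp (-π ^ 2 * y ^ 2) := by
  simpa using norm_gaussianPhase k α β x y 0

theorem norm_gaussianPhase_le (k : ℕ) {α β x Y y s : ℝ} (hβ : 0 < β) (hx : 0 < x)
    (hβY : β * Y ≤ 1) (hxY : 4 * x * β ^ 2 * Y ≤ α) (hy : |y| ≤ Y) (hs₀ : 0 ≤ s) (hs₁ : s ≤ 1) :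
    ‖gaussianPhase k α β x (y + s * Complex.I)‖ ≤
      (Y + 1) ^ k * exp (π ^ 2 - π ^ 2 * y ^ 2 - α * s / 2) := by
  have hnorm : ‖(y : ℂ) + s * Complex.I‖ ≤ Y + 1 := by
    refine (norm_add_le _ _).trans ?_
    rw [norm_mul, Complex.norm_I, mul_one, Complex.norm_real, Complex.norm_real,
      Real.norm_eq_abs, Real.norm_eq_abs, abs_of_nonneg hs₀]
    linarith
  have hβy : |β * y| ≤ β * Y := by
    rw [abs_mul, abs_of_pos hβ]
    gcongr
  have hsinh : |sinh (β * y)| ≤ 2 * (β * Y) :=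
    (abs_sinh_le_two_mul_abs (hβy.trans hβY)).trans (by linarith)
  have hsin : |sin (β * s)| ≤ β * s :=
    abs_sin_le_abs.trans_eq (abs_of_nonneg (by positivity))
  have hprod : |sinh (β * y) * sin (β * s)| ≤ 2 * (β * Y) * (β * s) := by
    rw [abs_mul]
    exact mul_le_mul hsinh hsin (abs_nonneg _) ((abs_nonneg _).trans hsinh)
  have h₁ : -(2 * (β * Y) * (β * s)) * x ≤ (sinh (β * y) * sin (β * s)) * x :=
    mul_le_mul_of_nonneg_right (abs_le.mp hprod).1 hx.le
  have h₂ : 4 * x * β ^ 2 * Y * s ≤ α * s := mul_le_mul_of_nonneg_right hxY hs₀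
  have h₃ : π ^ 2 * s ^ 2 ≤ π ^ 2 * 1 := by
    gcongr
    exact pow_le_one₀ hs₀ hs₁
  rw [norm_gaussianPhase]
  have hY : 0 ≤ Y := (abs_nonneg y).trans hy
  gcongr ?_ ^ k * exp ?_
  linarith

theorem integrable_abs_pow_mul_exp_neg_mul_sq (k : ℕ) {b : ℝ} (hb : 0 < b) :
    Integrable fun y : ℝ => |y| ^ k * exp (-b * y ^ 2) := by
  have h := (integrable_rpow_mul_exp_neg_mul_sq hb (s := k)
    (by linarith [k.cast_nonneg (α := ℝ)])).norm
  simpa [rpow_natCast, abs_mul] using h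

theorem integrable_gaussianPhase (k : ℕ) (α β x : ℝ) :
    Integrable fun y : ℝ => gaussianPhase k α β x y := by
  refine (integrable_abs_pow_mul_exp_neg_mul_sq k (b := π ^ 2) (by positivity)).mono' ?_ ?_
  · exact ((differentiable_gaussianPhase k α β x).continuous.comp
      Complex.continuous_ofReal).aestronglyMeasurable
  · exact .of_forall fun y => (norm_gaussianPhase_ofReal k α β x y).le

/-- Shifting `[-Y, Y]` up by `i` inside the region where the phase has imaginary part at least
`α s / 2`. -/
theorem norm_intervalIntegral_gaussianPhase_le (k : ℕ) {α β x Y : ℝ} (hβ : 0 < β) (hx : 0 < x)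
    (hY : 0 ≤ Y) (hβY : β * Y ≤ 1) (hxY : 4 * x * β ^ 2 * Y ≤ α) :
    ‖∫ y in -Y..Y, gaussianPhase k α β x y‖ ≤
      2 * exp (π ^ 2) * (Y + 1) ^ (k + 1) * (exp (-(α / 2)) + exp (-Y ^ 2)) := by
  have hα : 0 ≤ α := le_trans (by positivity) hxY
  have hrect := Complex.integral_boundary_rect_eq_zero_of_differentiableOn
    (gaussianPhase k α β x) ((-Y : ℝ) : ℂ) ((Y : ℝ) + Complex.I)
    (differentiable_gaussianPhase k α β x).differentiableOn
  simp only [Complex.ofReal_re, Complex.ofReal_im, Complex.add_re, Complex.add_im, Complex.I_re,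
    Complex.I_im, add_zero, zero_add, Complex.ofReal_zero, zero_mul, smul_eq_mul] at hrect
  have htop : ‖∫ y in -Y..Y, gaussianPhase k α β x (y + (1 : ℝ) * Complex.I)‖ ≤
      (Y + 1) ^ k * (exp (π ^ 2) * exp (-(α / 2))) * |Y - -Y| := by
    refine intervalIntegral.norm_integral_le_of_norm_le_const fun y hy => ?_
    rw [Set.uIoc_of_le (by linarith)] at hy
    refine (norm_gaussianPhase_le k hβ hx hβY hxY (abs_le.mpr ⟨hy.1.le, hy.2⟩) zero_le_one
      le_rfl).trans ?_
    rw [← exp_add]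
    gcongr
    nlinarith [sq_nonneg (π * y)]
  have hside : ∀ y : ℝ, |y| = Y →
      ‖∫ s in (0 : ℝ)..1, gaussianPhase k α β x (y + s * Complex.I)‖ ≤
        (Y + 1) ^ k * (exp (π ^ 2) * exp (-Y ^ 2)) * |1 - 0| := by
    intro y hy
    refine intervalIntegral.norm_integral_le_of_norm_le_const fun s hs => ?_
    rw [Set.uIoc_of_le zero_le_one] at hs
    refine (norm_gaussianPhase_le k hβ hx hβY hxY hy.le hs.1.le hs.2).trans ?_
    rw [← exp_add, ← hy, sq_abs]
    have := mul_nonneg hα hs.1.le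
    have : 1 * y ^ 2 ≤ π ^ 2 * y ^ 2 := by
      gcongr
      nlinarith [pi_gt_three]
    gcongr
    linarith
  have hright := hside Y (abs_of_nonneg hY)
  have hleft := hside (-Y) (by rw [abs_neg, abs_of_nonneg hY])
  have hsplit : ∫ y in -Y..Y, gaussianPhase k α β x y =
      (∫ y in -Y..Y, gaussianPhase k α β x (y + (1 : ℝ) * Complex.I)) -
        Complex.I * (∫ s in (0 : ℝ)..1, gaussianPhase k α β x ((Y : ℝ) + s * Complex.I)) +
        Complex.I * ∫ s in (0 : ℝ)..1, gaussianPhase k α β x ((-Y : ℝ) + s * Complex.I) := by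
    linear_combination hrect
  rw [hsplit]
  refine (norm_add_le _ _).trans ((add_le_add_left (norm_sub_le _ _) _).trans ?_)
  rw [norm_mul, norm_mul, Complex.norm_I, one_mul, one_mul]
  rw [sub_neg_eq_add, abs_of_nonneg (by linarith)] at htop
  rw [sub_zero, abs_one, mul_one] at hright hleft
  have h₁ : 0 ≤ (Y + 1) ^ k * (exp (π ^ 2) * exp (-(α / 2))) := by positivity
  have h₂ : 0 ≤ Y * ((Y + 1) ^ k * (exp (π ^ 2) * exp (-Y ^ 2))) := by positivity
  rw [pow_succ (Y + 1)]
  linarith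

theorem norm_integral_gaussianPhase_le (k : ℕ) {α β x Y : ℝ} (hβ : 0 < β) (hx : 0 < x)
    (hY : 0 ≤ Y) (hβY : β * Y ≤ 1) (hxY : 4 * x * β ^ 2 * Y ≤ α) :
    ‖∫ y : ℝ, gaussianPhase k α β x y‖ ≤
      (2 * exp (π ^ 2) + ∫ y : ℝ, |y| ^ k * exp (-1 * y ^ 2)) * (Y + 1) ^ (k + 1) *
        (exp (-(α / 2)) + exp (-Y ^ 2)) := by
  have hint := integrable_abs_pow_mul_exp_neg_mul_sq k one_pos
  have htail : ‖∫ y in (Set.Ioc (-Y) Y)ᶜ, gaussianPhase k α β x y‖ ≤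
      (∫ y : ℝ, |y| ^ k * exp (-1 * y ^ 2)) * exp (-Y ^ 2) := by
    calc _ ≤ ∫ y in (Set.Ioc (-Y) Y)ᶜ, |y| ^ k * exp (-1 * y ^ 2) * exp (-Y ^ 2) := by
          refine norm_integral_le_of_norm_le (hint.mul_const _).integrableOn ?_
          refine (ae_restrict_iff' measurableSet_Ioc.compl).mpr (.of_forall fun y hy => ?_)
          have hyY : Y ^ 2 ≤ y ^ 2 := by
            rw [Set.mem_compl_iff, Set.mem_Ioc, not_and_or, not_lt, not_le] at hy
            rcases hy with hy | hy <;> nlinarith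
          have hpi : 2 * y ^ 2 ≤ π ^ 2 * y ^ 2 := by
            gcongr
            nlinarith [pi_gt_three]
          rw [norm_gaussianPhase_ofReal, mul_assoc, ← exp_add]
          gcongr
          linarith
      _ ≤ ∫ y : ℝ, |y| ^ k * exp (-1 * y ^ 2) * exp (-Y ^ 2) :=
          setIntegral_le_integral (hint.mul_const _) (.of_forall fun y => by positivity)
      _ = _ := integral_mul_const _ _
  have hC : 0 ≤ ∫ y : ℝ, |y| ^ k * exp (-1 * y ^ 2) :=
    integral_nonneg fun y => by positivity
  have hmain := norm_intervalIntegral_gaussianPhase_le k hβ hx hY hβY hxY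
  rw [intervalIntegral.integral_of_le (by linarith)] at hmain
  rw [← integral_add_compl (measurableSet_Ioc (a := -Y) (b := Y))
    (integrable_gaussianPhase k α β x)]
  refine (norm_add_le _ _).trans ((add_le_add hmain htail).trans ?_)
  rw [mul_assoc _ ((Y + 1) ^ (k + 1)), mul_assoc _ ((Y + 1) ^ (k + 1)), add_mul]
  gcongr
  calc exp (-Y ^ 2) ≤ 1 * (exp (-(α / 2)) + exp (-Y ^ 2)) := by
        linarith [exp_pos (-(α / 2))]
    _ ≤ _ := by
        gcongr
        exact one_le_pow₀ (by linarith)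

theorem re_gaussianPhase_ofReal (k : ℕ) (α β x y : ℝ) :
    (gaussianPhase k α β x y).re =
      cos (α * y + x * cosh (β * y)) * (y ^ k * exp (-π ^ 2 * y ^ 2)) := by
  have h : gaussianPhase k α β x y = ((y ^ k * exp (-π ^ 2 * y ^ 2) : ℝ) : ℂ) *
      Complex.exp (((α * y + x * cosh (β * y) : ℝ) : ℂ) * Complex.I) := by
    rw [gaussianPhase, Complex.exp_add]
    push_cast
    ring_nf
  rw [h, Complex.re_ofReal_mul, Complex.exp_ofReal_mul_I_re, mul_comm]

theorem integrable_cos_mul_gaussian (k : ℕ) (α β x : ℝ) :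
    Integrable fun y : ℝ =>
      cos (α * y + x * cosh (β * y)) * (y ^ k * exp (-π ^ 2 * y ^ 2)) := by
  simp only [← re_gaussianPhase_ofReal]
  exact (integrable_gaussianPhase k α β x).re

theorem abs_integral_cos_mul_gaussian_le (k : ℕ) (α β x : ℝ) :
    |∫ y : ℝ, cos (α * y + x * cosh (β * y)) * (y ^ k * exp (-π ^ 2 * y ^ 2))| ≤
      ‖∫ y : ℝ, gaussianPhase k α β x y‖ := by
  have h := integral_re (integrable_gaussianPhase k α β x)
  simp only [← re_gaussianPhase_ofReal]
  exact (congrArg abs h).trans_le (Complex.abs_re_le_norm _)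

theorem integral_gaussian_mul_affine_mul_cexp (G T y : ℝ) :
    ∫ u : ℝ, (↑(exp (-u ^ 2) * (G * u + T)) : ℂ) * Complex.exp (2 * π * Complex.I * y * u) =
      ((√π * exp (-π ^ 2 * y ^ 2) : ℝ) : ℂ) * (T + Complex.I * (π * G * y)) := by
  set f : ℝ → ℂ := fun u => Complex.exp ((-1 : ℂ) * u ^ 2 + (2 * π * Complex.I * y) * u + 0)
    with hf
  have hfi : Integrable f := integrable_cexp_quadratic' (by simp) _ _
  have hfnorm : ∀ u : ℝ, ‖f u‖ = exp (-1 * u ^ 2) := fun u => by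
    have : (-1 : ℂ) * u ^ 2 + (2 * π * Complex.I * y) * u + 0 =
        ((-1 * u ^ 2 : ℝ) : ℂ) + ((2 * π * y * u : ℝ) : ℂ) * Complex.I := by
      push_cast
      ring
    simp only [hf, Complex.norm_exp, this]
    simp only [Complex.add_re, Complex.ofReal_re, Complex.re_ofReal_mul, Complex.I_re, mul_zero,
      add_zero]
  have huf : Integrable fun u : ℝ => (u : ℂ) * f u := by
    refine (integrable_abs_pow_mul_exp_neg_mul_sq 1 one_pos).mono' (by fun_prop) ?_
    refine .of_forall fun u => ?_
    rw [norm_mul, hfnorm, Complex.norm_real, Real.norm_eq_abs, pow_one]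
  have hderiv : ∀ u : ℝ, HasDerivAt f
      ((-2 : ℂ) * ((u : ℂ) * f u) + (2 * π * Complex.I * y) * f u) u := fun u => by
    have h : HasDerivAt (fun z : ℂ => Complex.exp ((-1 : ℂ) * z ^ 2 + (2 * π * Complex.I * y) * z
        + 0)) (f u * ((-1 : ℂ) * (2 * u) + (2 * π * Complex.I * y))) (u : ℂ) := by
      refine HasDerivAt.cexp ?_
      simpa using (((hasDerivAt_pow 2 (u : ℂ)).const_mul (-1 : ℂ)).add
        ((hasDerivAt_id (u : ℂ)).const_mul (2 * π * Complex.I * y))).add_const 0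
    convert h.comp_ofReal using 1
    ring
  have hzero := integral_eq_zero_of_hasDerivAt_of_integrable hderiv
    ((huf.const_mul _).add (hfi.const_mul _)) hfi
  rw [integral_add (huf.const_mul _) (hfi.const_mul _), integral_const_mul,
    integral_const_mul] at hzero
  have hgauss : ∫ u, f u = ((√π * exp (-π ^ 2 * y ^ 2) : ℝ) : ℂ) := by
    have h := fourierIntegral_gaussian (b := 1) (by simp) (2 * π * y)
    have hs : ((π : ℂ) / 1) ^ (1 / 2 : ℂ) = ((√π : ℝ) : ℂ) := by
      rw [sqrt_eq_rpow, Complex.ofReal_cpow pi_pos.le]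
      simp
    rw [hs] at h
    rw [Complex.ofReal_mul, Complex.ofReal_exp]
    convert h using 1
    · refine integral_congr_ae (.of_forall fun u => ?_)
      simp only [hf, ← Complex.exp_add]
      congr 1
      ring
    · congr 2
      push_cast
      ring
  have hcongr : ∀ u : ℝ, (↑(exp (-u ^ 2) * (G * u + T)) : ℂ) *
      Complex.exp (2 * π * Complex.I * y * u) = G * ((u : ℂ) * f u) + T * f u := fun u => by
    simp only [hf, add_zero, Complex.exp_add]
    push_cast
    ring_nf
  rw [integral_congr_ae (.of_forall hcongr), integral_add (huf.const_mul _) (hfi.const_mul _),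
    integral_const_mul, integral_const_mul, ← hgauss]
  linear_combination (-(G : ℂ) / 2) * hzero

theorem norm_integral_cos_mul_fourier_le {G T : ℝ} (hG : 0 ≤ G) (hT : 0 ≤ T) (α β x : ℝ) :
    ‖∫ y : ℝ, (↑(cos (α * y + x * cosh (β * y))) : ℂ) *
        ∫ u : ℝ, (↑(exp (-u ^ 2) * (G * u + T)) : ℂ) *
          Complex.exp (2 * π * Complex.I * y * u)‖ ≤
      √π * (T * ‖∫ y : ℝ, gaussianPhase 0 α β x y‖ +
        π * G * ‖∫ y : ℝ, gaussianPhase 1 α β x y‖) := by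
  have hcongr : ∀ y : ℝ, (↑(cos (α * y + x * cosh (β * y))) : ℂ) *
        (∫ u : ℝ, (↑(exp (-u ^ 2) * (G * u + T)) : ℂ) *
          Complex.exp (2 * π * Complex.I * y * u)) =
      (√π * T : ℂ) *
          ((cos (α * y + x * cosh (β * y)) * (y ^ 0 * exp (-π ^ 2 * y ^ 2)) : ℝ) : ℂ) +
        (√π * (π * G) * Complex.I : ℂ) *
          ((cos (α * y + x * cosh (β * y)) * (y ^ 1 * exp (-π ^ 2 * y ^ 2)) : ℝ) : ℂ) := by
    intro y
    rw [integral_gaussian_mul_affine_mul_cexp]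
    push_cast
    ring
  have h₀ := abs_integral_cos_mul_gaussian_le 0 α β x
  have h₁ := abs_integral_cos_mul_gaussian_le 1 α β x
  rw [integral_congr_ae (.of_forall hcongr),
    integral_add ((integrable_cos_mul_gaussian 0 α β x).ofReal.const_mul _)
      ((integrable_cos_mul_gaussian 1 α β x).ofReal.const_mul _),
    integral_const_mul, integral_const_mul, integral_complex_ofReal,
    integral_complex_ofReal]
  refine (norm_add_le _ _).trans ?_
  simp only [norm_mul, Complex.norm_real, Complex.norm_I, mul_one, Real.norm_eq_abs,
    abs_of_nonneg hG, abs_of_nonneg hT, abs_of_nonneg (sqrt_nonneg π), abs_of_pos pi_pos]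
  rw [mul_add, mul_assoc, mul_assoc]
  gcongr

theorem eventually_rpow_mul_exp_neg_rpow_le (r : ℝ) {δ : ℝ} (hδ : 0 < δ) :
    ∀ᶠ T : ℝ in Filter.atTop, T ^ r * exp (-T ^ δ) ≤ 1 := by
  have h := (tendsto_rpow_mul_exp_neg_mul_atTop_nhds_zero (r / δ) 1 one_pos).comp
    (tendsto_rpow_atTop hδ)
  filter_upwards [h.eventually_le_const one_pos, Filter.eventually_ge_atTop 0] with T hT hT₀
  simpa [← rpow_mul hT₀, mul_div_cancel₀ _ hδ.ne'] using hT

/-- Fix `1/3 < θ < 1`, `0 < ε < θ`, and set `G = T^θ`.  With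
`w(y) = ∫ e^{-u²}(Gu+T) e^{2πiyu} du`, for every `A > 0` there are `C, T₀ > 0`
(depending only on `θ, ε, A`) such that for all `T ≥ T₀` and all `0 < x < G·T^{1-ε}`,
`|∫ cos(2πTy/G + x·cosh(πy/G))·w(y) dy| ≤ C·G·(max{G/T, 1/G})^A`. -/
theorem stmt_1 (θ ε : ℝ) (hθ₁ : 1 / 3 < θ) (hθ₂ : θ < 1) (hε₁ : 0 < ε) (hε₂ : ε < θ)
    (A : ℝ) (hA : 0 < A) :
    ∃ C T₀ : ℝ, 0 < C ∧ 0 < T₀ ∧ ∀ T : ℝ, T₀ ≤ T → ∀ x : ℝ, 0 < x → x < T ^ θ * T ^ (1 - ε) →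
      ‖∫ y : ℝ,
          (↑(Real.cos (2 * Real.pi * T * y / T ^ θ + x * Real.cosh (Real.pi * y / T ^ θ))) : ℂ) *
            ∫ u : ℝ, (↑(Real.exp (-u ^ 2) * (T ^ θ * u + T)) : ℂ) *
              Complex.exp (2 * Real.pi * Complex.I * y * u)‖
        ≤ C * T ^ θ * max (T ^ θ / T) (1 / T ^ θ) ^ A := by
  set K : ℕ → ℝ := fun k => 2 * exp (π ^ 2) + ∫ y : ℝ, |y| ^ k * exp (-1 * y ^ 2)
  have hK : ∀ k, 0 < K k := fun k =>
    add_pos_of_pos_of_nonneg (by positivity) (integral_nonneg fun y => by positivity)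
  have hK₀ := hK 0
  have hK₁ := hK 1
  have hδ : 0 < min ε (1 - θ) := lt_min hε₁ (by linarith)
  obtain ⟨T₁, hT₁⟩ := Filter.eventually_atTop.mp
    ((eventually_rpow_mul_exp_neg_rpow_le (3 + A) hδ).and
      (((tendsto_rpow_atTop (half_pos hε₁)).eventually_ge_atTop (2 * π)).and
        (Filter.eventually_ge_atTop 1)))
  refine ⟨8 * √π * (K 0 + π * K 1), max T₁ 1, by positivity, by positivity, ?_⟩
  intro T hT x hx hxT
  obtain ⟨hexp, hTε, hT1⟩ := hT₁ T ((le_max_left _ _).trans hT)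
  have hT0 : 0 < T := one_pos.trans_le hT1
  set δ := min ε (1 - θ)
  set G := T ^ θ
  set Y := T ^ (ε / 2) with hYdef
  have hG1 : 1 ≤ G := one_le_rpow hT1 (by linarith)
  have hG0 : 0 < G := one_pos.trans_le hG1
  have hGT : G ≤ T := by simpa using rpow_le_rpow_of_exponent_le hT1 hθ₂.le
  have hY0 : 0 < Y := rpow_pos_of_pos hT0 _
  have hYT : Y ≤ T := by
    simpa using rpow_le_rpow_of_exponent_le hT1 (show ε / 2 ≤ 1 by linarith)
  have hYsq : Y ^ 2 = T ^ ε := by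
    rw [hYdef, ← rpow_natCast, ← rpow_mul hT0.le]
    norm_num
  have hYG : Y ^ 2 ≤ G := hYsq.trans_le (rpow_le_rpow_of_exponent_le hT1 hε₂.le)
  have hβY : π / G * Y ≤ 1 := by
    rw [div_mul_eq_mul_div, div_le_one hG0]
    nlinarith [pi_pos]
  have hTεY : T ^ (1 - ε) * Y ^ 2 = T := by
    rw [hYsq, ← rpow_add hT0, sub_add_cancel, rpow_one]
  have hxY : 4 * x * (π / G) ^ 2 * Y ≤ 2 * π * T / G := by
    have hT' : 0 < T ^ (1 - ε) := rpow_pos_of_pos hT0 _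
    calc 4 * x * (π / G) ^ 2 * Y
        ≤ 4 * (G * T ^ (1 - ε)) * (π / G) ^ 2 * Y := by gcongr
      _ = 2 * π * (T ^ (1 - ε) * (2 * π * Y)) / G := by
          field_simp
          ring
      _ ≤ 2 * π * (T ^ (1 - ε) * (Y * Y)) / G := by gcongr
      _ = 2 * π * T / G := by rw [← sq, hTεY]
  have hphase : 2 * π * T / G / 2 = π * T ^ (1 - θ) := by
    rw [rpow_sub hT0, rpow_one]
    ring
  have hdecay : exp (-(2 * π * T / G / 2)) + exp (-Y ^ 2) ≤ 2 * exp (-T ^ δ) := by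
    have h₁ : T ^ δ ≤ T ^ (1 - θ) := rpow_le_rpow_of_exponent_le hT1 (min_le_right _ _)
    have h₂ : T ^ δ ≤ T ^ ε := rpow_le_rpow_of_exponent_le hT1 (min_le_left _ _)
    have h₃ : exp (-(2 * π * T / G / 2)) ≤ exp (-T ^ δ) := by
      rw [hphase]
      gcongr
      nlinarith [pi_gt_three, rpow_pos_of_pos hT0 (1 - θ)]
    have h₄ : exp (-Y ^ 2) ≤ exp (-T ^ δ) := by
      rw [hYsq]
      gcongr
    linarith
  have hshift : ∀ k ≤ 1, ‖∫ y : ℝ, gaussianPhase k (2 * π * T / G) (π / G) x y‖ ≤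
      K k * (4 * T ^ 2) * (2 * exp (-T ^ δ)) := by
    intro k hk
    refine (norm_integral_gaussianPhase_le k (by positivity) hx hY0.le hβY hxY).trans ?_
    have hpow : (Y + 1) ^ (k + 1) ≤ 4 * T ^ 2 :=
      calc (Y + 1) ^ (k + 1) ≤ (Y + 1) ^ 2 := pow_le_pow_right₀ (by linarith) (by omega)
        _ ≤ (2 * T) ^ 2 := by
            gcongr
            linarith
        _ = 4 * T ^ 2 := by ring
    have := (hK k).le
    gcongr
  have hsmall : T ^ 3 * exp (-T ^ δ) ≤ T ^ (-A) := by
    rw [rpow_neg hT0.le, ← one_div, le_div_iff₀ (rpow_pos_of_pos hT0 A)]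
    rw [rpow_add hT0] at hexp
    norm_cast at hexp
    linarith
  have hmax : T ^ (-A) ≤ max (G / T) (1 / G) ^ A := by
    rw [rpow_neg hT0.le, ← inv_rpow hT0.le]
    refine rpow_le_rpow (by positivity) (le_max_of_le_left ?_) hA.le
    rw [inv_eq_one_div]
    gcongr
  have hint := norm_integral_cos_mul_fourier_le hG0.le hT0.le (2 * π * T / G) (π / G) x
  simp only [div_mul_eq_mul_div] at hint
  calc _ ≤ _ := hint
    _ ≤ √π * (T * (K 0 * (4 * T ^ 2) * (2 * exp (-T ^ δ))) +
          π * T * (K 1 * (4 * T ^ 2) * (2 * exp (-T ^ δ)))) := by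
        gcongr
        · exact hshift 0 zero_le_one
        · exact hshift 1 le_rfl
    _ = 8 * √π * (K 0 + π * K 1) * 1 * (T ^ 3 * exp (-T ^ δ)) := by ring
    _ ≤ 8 * √π * (K 0 + π * K 1) * G * max (G / T) (1 / G) ^ A := by
        gcongr
        exact hsmall.trans hmax
end

section
/- For every natural number n ≥ 1 and all constants 0 < κ ≤ K there exists C > 0 (depending only on n, κ, K) with the following property. Let D = [a,b] × [c,d] be a rectangle with a < b and c < d, let λ > 0, and let f be a real-valued function, twice continuously differentiable on an open neighbourhood of D, which is algebraic in the sense that there is a nonzero real polynomial P in three variables of total degree at most n with P(x₁, x₂, f(x₁,x₂)) = 0 for all (x₁,x₂) ∈ D. Assume that throughout D: κλ ≤ |∂²f/∂x₁²| ≤ Kλ, κλ ≤ |∂²f/∂x₂²| ≤ Kλ, |∂²f/∂x₁∂x₂| ≤ Kλ, and |(∂²f/∂x₁²)(∂²f/∂x₂²) − (∂²f/∂x₁∂x₂)²| ≥ κλ². Then |∬_D e^{i f(x₁,x₂)} dx₁ dx₂| ≤ C·(1 + |log(b−a)| + |log(d−c)| + |log λ|)/λ. -/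
open Set

/-- The linear form `(x, y) ↦ a x + b y` on the plane. -/
noncomputable def planeForm (a b : ℝ) : ℝ × ℝ →L[ℝ] ℝ :=
  a • ContinuousLinearMap.fst ℝ ℝ ℝ + b • ContinuousLinearMap.snd ℝ ℝ ℝ

@[simp]
theorem planeForm_apply (a b : ℝ) (z : ℝ × ℝ) : planeForm a b z = a * z.1 + b * z.2 := by
  simp [planeForm]

theorem HasFDerivAt.exists_planeForm_sub_eq {F α β : ℝ × ℝ → ℝ} {R : Set (ℝ × ℝ)}
    (hR : Convex ℝ R) (hF : ∀ p ∈ R, HasFDerivAt F (planeForm (α p) (β p)) p)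
    {p q : ℝ × ℝ} (hp : p ∈ R) (hq : q ∈ R) :
    ∃ z ∈ R, F q - F p = α z * (q.1 - p.1) + β z * (q.2 - p.2) := by
  obtain ⟨z, hz, h⟩ := domain_mvt (fun x hx => (hF x hx).hasFDerivWithinAt) hR hp hq
  exact ⟨z, hR.segment_subset hp hq hz, by simpa using h⟩

theorem HasDerivAt.eventually_lt_of_neg {g : ℝ → ℝ} {g' x : ℝ} (hg : HasDerivAt g g' x)
    (hg' : g' < 0) : ∀ᶠ t in nhdsWithin x (Ioi x), g t < g x := by
  have h := (hasDerivAt_iff_tendsto_slope.1 hg).mono_left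
    (nhdsWithin_mono x (fun t (ht : x < t) => ht.ne'))
  filter_upwards [h.eventually_lt_const hg', self_mem_nhdsWithin] with t ht hxt
  have hxt' : 0 < t - x := sub_pos.2 hxt
  rw [slope_def_field, div_lt_iff₀ hxt'] at ht
  linarith

/-- Quantitative injectivity on a box for a plane map whose Jacobian is an `M`-matrix. -/
theorem le_max_of_hasFDerivAt_mMatrix {F G α β γ : ℝ × ℝ → ℝ} {S T ε : ℝ}
    (hF : ∀ p ∈ Icc 0 S ×ˢ Icc 0 T, HasFDerivAt F (planeForm (α p) (-β p)) p)
    (hG : ∀ p ∈ Icc 0 S ×ˢ Icc 0 T, HasFDerivAt G (planeForm (-γ p) (α p)) p)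
    (hε : 0 < ε) (hα : ∀ p ∈ Icc 0 S ×ˢ Icc 0 T, ε ≤ α p)
    (hβ : ∀ p ∈ Icc 0 S ×ˢ Icc 0 T, 0 ≤ β p) (hγ : ∀ p ∈ Icc 0 S ×ˢ Icc 0 T, 0 ≤ γ p)
    (hdet : ∀ p ∈ Icc 0 S ×ˢ Icc 0 T, ε * (2 * α p + β p + γ p) < α p ^ 2 - β p * γ p)
    (hF0 : F 0 = 0) (hG0 : G 0 = 0) {z : ℝ × ℝ} (hz : z ∈ Icc 0 S ×ˢ Icc 0 T) :
    ε * (z.1 + z.2) ≤ max (F z) (G z) := by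
  have hconv : Convex ℝ (Icc 0 S ×ˢ Icc 0 T) := (convex_Icc _ _).prod (convex_Icc _ _)
  have h0 : (0 : ℝ × ℝ) ∈ Icc 0 S ×ˢ Icc 0 T := by
    simp only [mem_prod, mem_Icc] at hz ⊢
    refine ⟨⟨le_rfl, ?_⟩, le_rfl, ?_⟩ <;> simp <;> linarith
  have hcont : ContinuousOn (fun p : ℝ × ℝ => max (F p) (G p) - ε * (p.1 + p.2))
      (Icc 0 S ×ˢ Icc 0 T) := by
    have hFc : ContinuousOn F (Icc 0 S ×ˢ Icc 0 T) :=
      fun p hp => (hF p hp).continuousAt.continuousWithinAt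
    have hGc : ContinuousOn G (Icc 0 S ×ˢ Icc 0 T) :=
      fun p hp => (hG p hp).continuousAt.continuousWithinAt
    exact (hFc.sup hGc).sub (by fun_prop)
  obtain ⟨w, hw, hmin⟩ := (isCompact_Icc.prod isCompact_Icc).exists_isMinOn ⟨z, hz⟩ hcont
  suffices hw0 : 0 ≤ max (F w) (G w) - ε * (w.1 + w.2) by
    have := hmin hz
    simp only [mem_ofPred_eq] at this
    linarith
  obtain ⟨⟨hw1, hw1'⟩, hw2, hw2'⟩ := id hw
  rcases hw1.eq_or_lt with hs | hs
  · obtain ⟨ξ, hξ, h⟩ := HasFDerivAt.exists_planeForm_sub_eq hconv hG h0 hw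
    simp only [hG0, Prod.fst_zero, Prod.snd_zero, ← hs] at h
    have := mul_le_mul_of_nonneg_right (hα ξ hξ) hw2
    have := le_max_right (F w) (G w)
    rw [← hs]
    linarith
  rcases hw2.eq_or_lt with ht | ht
  · obtain ⟨ξ, hξ, h⟩ := HasFDerivAt.exists_planeForm_sub_eq hconv hF h0 hw
    simp only [hF0, Prod.fst_zero, Prod.snd_zero, ← ht] at h
    have := mul_le_mul_of_nonneg_right (hα ξ hξ) hw1
    have := le_max_left (F w) (G w)
    rw [← ht]
    linarith
  exfalso
  have hαw := hα w hw
  have hβw := hβ w hw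
  have hγw := hγ w hw
  have hdw := hdet w hw
  set h : ℝ × ℝ := (-(α w + β w), -(γ w + α w)) with hh
  have hline : HasDerivAt (fun τ : ℝ => w + τ • h) h 0 := by
    simpa using ((hasDerivAt_id (0 : ℝ)).smul_const h).const_add w
  have hlin : HasFDerivAt (fun p : ℝ × ℝ => ε * (p.1 + p.2)) (planeForm ε ε) w := by
    have := (planeForm ε ε).hasFDerivAt (x := w)
    refine this.congr_of_eventuallyEq (Filter.Eventually.of_forall fun p => ?_)
    simp; ring
  have hw' : w = w + (0 : ℝ) • h := by simp
  have hdF := ((hF w hw).sub hlin).comp_hasDerivAt_of_eq (0 : ℝ) hline hw'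
  have hdG := ((hG w hw).sub hlin).comp_hasDerivAt_of_eq (0 : ℝ) hline hw'
  have hFlt := hdF.eventually_lt_of_neg (by simp [hh]; nlinarith)
  have hGlt := hdG.eventually_lt_of_neg (by simp [hh]; nlinarith)
  have hlt1 : ∀ᶠ τ in nhdsWithin (0 : ℝ) (Ioi 0), 0 < (w + τ • h).1 :=
    nhdsWithin_le_nhds (hline.continuousAt.fst.eventually_const_lt (by simpa using hs))
  have hlt2 : ∀ᶠ τ in nhdsWithin (0 : ℝ) (Ioi 0), 0 < (w + τ • h).2 :=
    nhdsWithin_le_nhds (hline.continuousAt.snd.eventually_const_lt (by simpa using ht))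
  obtain ⟨τ, hFτ, hGτ, h1, h2, hτ⟩ :=
    (hFlt.and (hGlt.and (hlt1.and (hlt2.and self_mem_nhdsWithin)))).exists
  have hτ : 0 < τ := hτ
  have hmem : w + τ • h ∈ Icc 0 S ×ˢ Icc 0 T := by
    refine ⟨⟨h1.le, ?_⟩, h2.le, ?_⟩ <;> simp [hh] <;> nlinarith
  have hle := hmin hmem
  simp only [mem_ofPred_eq] at hle
  simp only [Function.comp_def, Pi.sub_apply, zero_smul, add_zero] at hFτ hGτ
  have : max (F (w + τ • h)) (G (w + τ • h)) - ε * ((w + τ • h).1 + (w + τ • h).2) <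
      max (F w) (G w) - ε * (w.1 + w.2) := by
    rw [max_sub_sub_right .. |>.symm, max_sub_sub_right .. |>.symm]
    exact max_lt_max hFτ hGτ
  linarith

theorem IsPreconnected.exists_sign_mul_eq_abs {X : Type*} [TopologicalSpace X] {s : Set X}
    (hs : IsPreconnected s) {g : X → ℝ} (hg : ContinuousOn g s) (h0 : ∀ x ∈ s, g x ≠ 0) :
    ∃ τ : ℝ, (τ = 1 ∨ τ = -1) ∧ ∀ x ∈ s, τ * g x = |g x| := by
  by_cases hneg : ∃ x ∈ s, g x < 0
  · obtain ⟨x, hx, hgx⟩ := hneg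
    refine ⟨-1, Or.inr rfl, fun y hy => ?_⟩
    have hy0 : g y < 0 := by
      by_contra! hgy
      obtain ⟨z, hz, hgz⟩ := hs.intermediate_value hx hy hg ⟨hgx.le, hgy⟩
      exact h0 z hz hgz
    rw [abs_of_neg hy0]
    ring
  · push Not at hneg
    exact ⟨1, Or.inl rfl, fun y hy => by rw [abs_of_nonneg (hneg y hy), one_mul]⟩

theorem sq_mul_le_of_mul_le_abs_add {k x y r s : ℝ} (hk : 0 ≤ k)
    (h : k * (x ^ 2 + y ^ 2) ≤ |r * x + s * y|) :
    k ^ 2 * (x ^ 2 + y ^ 2) ≤ r ^ 2 + s ^ 2 := by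
  rcases (add_nonneg (sq_nonneg x) (sq_nonneg y)).eq_or_lt with h0 | h0
  · rw [← h0]
    simpa using add_nonneg (sq_nonneg r) (sq_nonneg s)
  · have h1 : (k * (x ^ 2 + y ^ 2)) ^ 2 ≤ (r * x + s * y) ^ 2 := by
      rw [← sq_abs (r * x + s * y)]
      gcongr
    refine le_of_mul_le_mul_right ?_ h0
    nlinarith [sq_nonneg (r * y - s * x)]

theorem sq_mul_le_of_mul_le_abs {k x y r s : ℝ} (hk : 0 ≤ k)
    (h : k * (|x| + |y|) ≤ |r|) : k ^ 2 * (x ^ 2 + y ^ 2) ≤ r ^ 2 + s ^ 2 := by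
  have h1 : (k * (|x| + |y|)) ^ 2 ≤ r ^ 2 := by
    rw [← sq_abs r]
    gcongr
  have h2 : x ^ 2 + y ^ 2 ≤ (|x| + |y|) ^ 2 := by
    nlinarith [sq_abs x, sq_abs y, mul_nonneg (abs_nonneg x) (abs_nonneg y)]
  nlinarith [mul_le_mul_of_nonneg_left h2 (sq_nonneg k), sq_nonneg s]

/-- `u` and `v` form a differentiable gradient field on `R` with Jacobian `(A, B; B, D)`. -/
structure HasHessianOn (u v A B D : ℝ × ℝ → ℝ) (R : Set (ℝ × ℝ)) : Prop where
  fst : ∀ p ∈ R, HasFDerivAt u (planeForm (A p) (B p)) p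
  snd : ∀ p ∈ R, HasFDerivAt v (planeForm (B p) (D p)) p
  continuousOn_fst : ContinuousOn A R
  continuousOn_mixed : ContinuousOn B R
  continuousOn_snd : ContinuousOn D R

/-- The size conditions of the second-derivative test for a Hessian `(A, B; B, D)` on `R`. -/
structure HessianBounds (κ K lam : ℝ) (A B D : ℝ × ℝ → ℝ) (R : Set (ℝ × ℝ)) : Prop where
  le_fst : ∀ p ∈ R, κ * lam ≤ |A p|
  fst_le : ∀ p ∈ R, |A p| ≤ K * lam
  le_snd : ∀ p ∈ R, κ * lam ≤ |D p|
  snd_le : ∀ p ∈ R, |D p| ≤ K * lam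
  mixed_le : ∀ p ∈ R, |B p| ≤ K * lam
  le_det : ∀ p ∈ R, κ * lam ^ 2 ≤ |A p * D p - B p ^ 2|

section

variable {u v A B D : ℝ × ℝ → ℝ} {R : Set (ℝ × ℝ)}

theorem HasHessianOn.exists_combination_sub_eq (h : HasHessianOn u v A B D R) (hR : Convex ℝ R)
    (r s : ℝ) {p q : ℝ × ℝ} (hp : p ∈ R) (hq : q ∈ R) :
    ∃ z ∈ R, r * (u q - u p) + s * (v q - v p) =
      (r * A z + s * B z) * (q.1 - p.1) + (r * B z + s * D z) * (q.2 - p.2) := by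
  have hF : ∀ z ∈ R, HasFDerivAt (fun z => r * u z + s * v z)
      (planeForm (r * A z + s * B z) (r * B z + s * D z)) z := by
    intro z hz
    refine (((h.fst z hz).const_mul r).add ((h.snd z hz).const_mul s)).congr_fderiv ?_
    ext <;> simp
  obtain ⟨z, hz, hz'⟩ := HasFDerivAt.exists_planeForm_sub_eq hR hF hp hq
  exact ⟨z, hz, by rw [← hz']; ring⟩

theorem abs_quadraticForm_ge {κ K lam m A B D x y : ℝ} (hK : 0 < K) (hlam : 0 < lam)
    (hmK : 8 * K * m ≤ κ) (hA : |A| ≤ K * lam) (hD : |D| ≤ K * lam)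
    (hdet : κ * lam ^ 2 ≤ A * D - B ^ 2) :
    m * lam * (x ^ 2 + y ^ 2) ≤ |(A * x + B * y) * x + (B * x + D * y) * y| := by
  set q := (A * x + B * y) * x + (B * x + D * y) * y with hq
  have h1 : κ * lam ^ 2 * y ^ 2 ≤ K * lam * |q| := by
    calc κ * lam ^ 2 * y ^ 2 ≤ A * q := by
          nlinarith [sq_nonneg (A * x + B * y), mul_le_mul_of_nonneg_right hdet (sq_nonneg y)]
      _ ≤ |A| * |q| := by rw [← abs_mul]; exact le_abs_self _
      _ ≤ _ := by gcongr
  have h2 : κ * lam ^ 2 * x ^ 2 ≤ K * lam * |q| := by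
    calc κ * lam ^ 2 * x ^ 2 ≤ D * q := by
          nlinarith [sq_nonneg (B * x + D * y), mul_le_mul_of_nonneg_right hdet (sq_nonneg x)]
      _ ≤ |D| * |q| := by rw [← abs_mul]; exact le_abs_self _
      _ ≤ _ := by gcongr
  have h3 : 8 * K * m * (lam ^ 2 * (x ^ 2 + y ^ 2)) ≤ κ * (lam ^ 2 * (x ^ 2 + y ^ 2)) := by
    gcongr
  have h4 : K * lam * (4 * (m * lam * (x ^ 2 + y ^ 2))) ≤ K * lam * |q| := by nlinarith
  have h5 := le_of_mul_le_mul_left h4 (by positivity)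
  have h6 := abs_nonneg q
  linarith

/-- On a rectangle a gradient field whose Hessian is nondegenerate with nonvanishing diagonal
expands distances. -/
theorem HasHessianOn.sq_dist_le {a b c d κ K lam m : ℝ}
    (h : HasHessianOn u v A B D (Icc a b ×ˢ Icc c d))
    (hb : HessianBounds κ K lam A B D (Icc a b ×ˢ Icc c d))
    (hκ : 0 < κ) (hK : 0 < K) (hlam : 0 < lam) (hm : 0 < m) (hmκ : m ≤ κ) (hmκ' : m ^ 2 ≤ κ)
    (hmK : 8 * K * m ≤ κ) {p q : ℝ × ℝ} (hp : p ∈ Icc a b ×ˢ Icc c d)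
    (hq : q ∈ Icc a b ×ˢ Icc c d) :
    (m * lam) ^ 2 * ((q.1 - p.1) ^ 2 + (q.2 - p.2) ^ 2) ≤
      (u q - u p) ^ 2 + (v q - v p) ^ 2 := by
  have hR : Convex ℝ (Icc a b ×ˢ Icc c d) := (convex_Icc _ _).prod (convex_Icc _ _)
  have hpre := hR.isPreconnected
  have hκl : 0 < κ * lam := by positivity
  have hml : 0 < m * lam := by positivity
  have hmkl : m * lam ≤ κ * lam := by gcongr
  obtain ⟨τ₁, hτ₁, hA⟩ := hpre.exists_sign_mul_eq_abs h.continuousOn_fst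
    (fun z hz => abs_pos.1 (hκl.trans_le (hb.le_fst z hz)))
  obtain ⟨τ₂, hτ₂, hD⟩ := hpre.exists_sign_mul_eq_abs h.continuousOn_snd
    (fun z hz => abs_pos.1 (hκl.trans_le (hb.le_snd z hz)))
  obtain ⟨τ₃, hτ₃, hH⟩ := hpre.exists_sign_mul_eq_abs
    ((h.continuousOn_fst.mul h.continuousOn_snd).sub (h.continuousOn_mixed.pow 2))
    (fun z hz => abs_pos.1 (lt_of_lt_of_le (by positivity) (hb.le_det z hz)))
  have hdet := hb.le_det
  rcases hτ₃ with rfl | rfl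
  · -- definite Hessian
    obtain ⟨z, hz, hz'⟩ :=
      h.exists_combination_sub_eq hR (q.1 - p.1) (q.2 - p.2) hp hq
    refine sq_mul_le_of_mul_le_abs_add hml.le ?_
    have h1 := abs_quadraticForm_ge (x := q.1 - p.1) (y := q.2 - p.2) hK hlam hmK
      (hb.fst_le z hz) (hb.snd_le z hz) (B := B z)
      (by have := hdet z hz; have := hH z hz; simp at this; linarith)
    refine h1.trans_eq (congrArg _ ?_)
    linear_combination -hz'
  by_cases hτ : τ₁ = τ₂
  swap
  · -- diagonal entries of opposite sign
    have hτ' : τ₂ = -τ₁ := by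
      rcases hτ₁ with rfl | rfl <;> rcases hτ₂ with rfl | rfl <;> simp_all
    obtain ⟨z, hz, hz'⟩ :=
      h.exists_combination_sub_eq hR (q.1 - p.1) (-(q.2 - p.2)) hp hq
    have h1 : τ₁ * ((u q - u p) * (q.1 - p.1) + (-(v q - v p)) * (q.2 - p.2)) =
        |A z| * (q.1 - p.1) ^ 2 + |D z| * (q.2 - p.2) ^ 2 := by
      rw [← hA z hz, ← hD z hz, hτ']
      linear_combination τ₁ * hz'
    have h2 := mul_le_mul_of_nonneg_right (hmkl.trans (hb.le_fst z hz)) (sq_nonneg (q.1 - p.1))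
    have h3 := mul_le_mul_of_nonneg_right (hmkl.trans (hb.le_snd z hz)) (sq_nonneg (q.2 - p.2))
    rw [← neg_sq (v q - v p)]
    refine sq_mul_le_of_mul_le_abs_add hml.le ?_
    have h4 : |(u q - u p) * (q.1 - p.1) + (-(v q - v p)) * (q.2 - p.2)| =
        |τ₁ * ((u q - u p) * (q.1 - p.1) + (-(v q - v p)) * (q.2 - p.2))| := by
      rcases hτ₁ with rfl | rfl <;> simp only [one_mul, neg_one_mul, abs_neg]
    rw [h4, h1]
    refine le_trans ?_ (le_abs_self _)
    linarith
  -- diagonal entries of the same sign, indefinite Hessian: the mixed entry dominates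
  subst hτ
  have hdet' : ∀ z ∈ Icc a b ×ˢ Icc c d, κ * lam ^ 2 ≤ |B z| ^ 2 - |D z| * |A z| := by
    intro z hz
    have h1 := hdet z hz
    have h2 := hH z hz
    simp only [Pi.sub_apply, Pi.mul_apply, Pi.pow_apply] at h2
    rw [sq_abs, ← hA z hz, ← hD z hz]
    have : τ₁ ^ 2 = 1 := by rcases hτ₁ with rfl | rfl <;> norm_num
    calc κ * lam ^ 2 ≤ _ := h1.trans_eq h2.symm
      _ = _ := by linear_combination (A z * D z) * this
  have hBlow : ∀ z ∈ Icc a b ×ˢ Icc c d, m * lam ≤ |B z| := by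
    intro z hz
    refine le_of_sq_le_sq ?_ (abs_nonneg _)
    have := hdet' z hz
    have := mul_nonneg (abs_nonneg (D z)) (abs_nonneg (A z))
    nlinarith [mul_le_mul_of_nonneg_right hmκ' (sq_nonneg lam)]
  obtain ⟨σ, hσ, hB⟩ := hpre.exists_sign_mul_eq_abs h.continuousOn_mixed
    (fun z hz => abs_pos.1 (hml.trans_le (hBlow z hz)))
  have hτs : τ₁ ^ 2 = 1 := by rcases hτ₁ with rfl | rfl <;> norm_num
  have hσs : σ ^ 2 = 1 := by rcases hσ with rfl | rfl <;> norm_num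
  have hτa : |τ₁| = 1 := by rcases hτ₁ with rfl | rfl <;> norm_num
  have hσa : |σ| = 1 := by rcases hσ with rfl | rfl <;> norm_num
  rcases le_or_gt 0 ((q.1 - p.1) * (τ₁ * σ * (q.2 - p.2))) with hsame | hopp
  · obtain ⟨z, hz, hz'⟩ := h.exists_combination_sub_eq hR 1 0 hp hq
    refine sq_mul_le_of_mul_le_abs hml.le ?_
    have h1 : τ₁ * (u q - u p) =
        |A z| * (q.1 - p.1) + |B z| * (τ₁ * σ * (q.2 - p.2)) := by
      rw [← hA z hz, ← hB z hz]
      linear_combination τ₁ * hz' - τ₁ * B z * (q.2 - p.2) * hσs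
    have h2 : |u q - u p| = |A z| * |q.1 - p.1| + |B z| * |q.2 - p.2| := by
      have h3 : |u q - u p| = |τ₁ * (u q - u p)| := by rw [abs_mul, hτa, one_mul]
      have h4 : 0 ≤ (|A z| * (q.1 - p.1)) * (|B z| * (τ₁ * σ * (q.2 - p.2))) := by
        have := mul_nonneg (mul_nonneg (abs_nonneg (A z)) (abs_nonneg (B z))) hsame
        linarith
      rw [h3, h1, (abs_add_eq_add_abs_iff _ _).2 (mul_nonneg_iff.1 h4)]
      simp only [abs_mul, abs_abs, hτa, hσa, one_mul]
    rw [h2, mul_add]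
    gcongr
    · exact hmkl.trans (hb.le_fst z hz)
    · exact hBlow z hz
  · have key : ∀ p q : ℝ × ℝ, p ∈ Icc a b ×ˢ Icc c d → q ∈ Icc a b ×ˢ Icc c d →
        0 < q.1 - p.1 → τ₁ * σ * (q.2 - p.2) < 0 →
        (m * lam) ^ 2 * ((q.1 - p.1) ^ 2 + (q.2 - p.2) ^ 2) ≤
          (u q - u p) ^ 2 + (v q - v p) ^ 2 := by
      intro p q hp hq h1 h2
      set S := q.1 - p.1 with hS
      set T := -(τ₁ * σ * (q.2 - p.2)) with hT
      have hTq : q.2 - p.2 = -(τ₁ * σ) * T := by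
        rw [hT]; linear_combination (-(q.2 - p.2)) * (hτs * σ ^ 2 + hσs)
      have hmaps : ∀ z ∈ Icc 0 S ×ˢ Icc 0 T,
          (p.1 + z.1, p.2 + -(τ₁ * σ) * z.2) ∈ Icc a b ×ˢ Icc c d := by
        rintro ⟨x, y⟩ ⟨⟨hx, hx'⟩, hy, hy'⟩
        obtain ⟨⟨hp1, hp1'⟩, hp2, hp2'⟩ := hp
        obtain ⟨⟨hq1, hq1'⟩, hq2, hq2'⟩ := hq
        simp only at hx hx' hy hy'
        refine ⟨⟨by simp only; linarith, by simp only; linarith⟩, ?_⟩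
        have : τ₁ * σ = 1 ∨ τ₁ * σ = -1 := by
          rcases hτ₁ with rfl | rfl <;> rcases hσ with rfl | rfl <;> norm_num
        rcases this with h | h <;> rw [h] at hT ⊢ <;>
          exact ⟨by simp only; linarith, by simp only; linarith⟩
      have hΦ : ∀ z : ℝ × ℝ, HasFDerivAt
          (fun z : ℝ × ℝ => (p.1 + z.1, p.2 + -(τ₁ * σ) * z.2))
          ((planeForm 1 0).prod (planeForm 0 (-(τ₁ * σ)))) z := by
        intro z
        have e1 : HasFDerivAt (fun z : ℝ × ℝ => p.1 + z.1) (planeForm 1 0) z := by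
          refine (hasFDerivAt_fst.const_add p.1).congr_fderiv ?_
          ext <;> simp
        have e2 : HasFDerivAt (fun z : ℝ × ℝ => p.2 + -(τ₁ * σ) * z.2)
            (planeForm 0 (-(τ₁ * σ))) z := by
          refine ((hasFDerivAt_snd.const_mul (-(τ₁ * σ))).const_add p.2).congr_fderiv ?_
          ext <;> simp
        exact e1.prodMk e2
      have hmain := le_max_of_hasFDerivAt_mMatrix (S := S) (T := T) (ε := m * lam)
        (F := fun z => σ * (v (p.1 + z.1, p.2 + -(τ₁ * σ) * z.2) - v p))
        (G := fun z => -τ₁ * (u (p.1 + z.1, p.2 + -(τ₁ * σ) * z.2) - u p))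
        (α := fun z => |B (p.1 + z.1, p.2 + -(τ₁ * σ) * z.2)|)
        (β := fun z => |D (p.1 + z.1, p.2 + -(τ₁ * σ) * z.2)|)
        (γ := fun z => |A (p.1 + z.1, p.2 + -(τ₁ * σ) * z.2)|)
        (fun z hz => by
          have hz' := hmaps z hz
          refine ((((h.snd _ hz').comp z (hΦ z)).sub_const (v p)).const_mul σ).congr_fderiv ?_
          rw [← hB _ hz', ← hD _ hz']
          generalize (p.1 + z.1, p.2 + -(τ₁ * σ) * z.2) = w
          ext
          · simp
          · simp
            linear_combination τ₁ * D w * hσs)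
        (fun z hz => by
          have hz' := hmaps z hz
          refine ((((h.fst _ hz').comp z (hΦ z)).sub_const (u p)).const_mul (-τ₁)).congr_fderiv ?_
          rw [← hB _ hz', ← hA _ hz']
          generalize (p.1 + z.1, p.2 + -(τ₁ * σ) * z.2) = w
          ext
          · simp
          · simp
            linear_combination σ * B w * hτs)
        hml (fun z hz => hBlow _ (hmaps z hz)) (fun z _ => abs_nonneg _)
        (fun z _ => abs_nonneg _)
        (fun z hz => by
          have hz' := hmaps z hz
          refine lt_of_lt_of_le ?_ (hdet' _ hz')
          have e1 := hb.fst_le _ hz'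
          have e2 := hb.snd_le _ hz'
          have e3 := hb.mixed_le _ hz'
          calc _ ≤ m * lam * (2 * (K * lam) + K * lam + K * lam) := by gcongr
            _ = (8 * K * m) * lam ^ 2 / 2 := by ring
            _ ≤ κ * lam ^ 2 / 2 := by gcongr
            _ < κ * lam ^ 2 := half_lt_self (by positivity))
        (by simp) (by simp) (z := (S, T)) ⟨⟨h1.le, le_rfl⟩, by rw [hT]; linarith, le_rfl⟩
      have hq' : (p.1 + S, p.2 + -(τ₁ * σ) * T) = q := by
        rw [← hTq, hS]; ext <;> simp
      simp only [hq'] at hmain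
      have hTa : |q.2 - p.2| = T := by
        rw [hTq, abs_mul, abs_neg, abs_mul, hτa, hσa, one_mul, one_mul, abs_of_nonneg]
        rw [hT]; linarith
      rw [← abs_of_pos h1, ← hTa] at hmain
      rcases le_max_iff.1 hmain with hF | hG
      · rw [add_comm (_ ^ 2) ((v q - v p) ^ 2)]
        refine sq_mul_le_of_mul_le_abs hml.le (hF.trans ((le_abs_self _).trans_eq ?_))
        rw [abs_mul, hσa, one_mul]
      · refine sq_mul_le_of_mul_le_abs hml.le (hG.trans ((le_abs_self _).trans_eq ?_))
        rw [abs_mul, abs_neg, hτa, one_mul]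
    rcases mul_neg_iff.1 hopp with ⟨h1, h2⟩ | ⟨h1, h2⟩
    · exact key p q hp hq h1 h2
    · have := key q p hq hp (by linarith) (by linarith)
      linarith [sub_sq_comm q.1 p.1, sub_sq_comm q.2 p.2, sub_sq_comm (u q) (u p),
        sub_sq_comm (v q) (v p)]

end

theorem integral_inv_sqrt_one_add_sq_le {a b μ x₀ : ℝ} (hμ : 0 < μ) (hx₀ : x₀ ∈ Icc a b) :
    ∫ x in a..b, (√(1 + (μ * (x - x₀)) ^ 2))⁻¹ ≤ 2 / μ * Real.log (1 + 2 * μ * (b - a)) := by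
  have hderiv : ∀ x, HasDerivAt (fun x => Real.arsinh (μ * (x - x₀)) / μ)
      (√(1 + (μ * (x - x₀)) ^ 2))⁻¹ x := by
    intro x
    have := ((((hasDerivAt_id x).sub_const x₀).const_mul μ).arsinh).div_const μ
    refine this.congr_deriv ?_
    simp [hμ.ne']
  have hcont : Continuous fun x : ℝ => (√(1 + (μ * (x - x₀)) ^ 2))⁻¹ :=
    Continuous.inv₀ (by fun_prop) (fun x => (Real.sqrt_pos.2 (by positivity)).ne')
  rw [intervalIntegral.integral_eq_sub_of_hasDerivAt (fun x _ => hderiv x)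
    (hcont.intervalIntegrable _ _)]
  have harsinh : ∀ t, 0 ≤ t → t ≤ b - a →
      Real.arsinh (μ * t) ≤ Real.log (1 + 2 * μ * (b - a)) := by
    intro t ht htb
    have hμt : 0 ≤ μ * t := by positivity
    have h1 : √(1 + (μ * t) ^ 2) ≤ 1 + μ * t :=
      Real.sqrt_le_iff.2 ⟨by positivity, by nlinarith⟩
    have h2 : μ * t ≤ μ * (b - a) := by gcongr
    unfold Real.arsinh
    exact Real.log_le_log (by positivity) (by linarith)
  have h1 := harsinh (b - x₀) (by linarith [hx₀.2]) (by linarith [hx₀.1])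
  have h2 := harsinh (x₀ - a) (by linarith [hx₀.1]) (by linarith [hx₀.2])
  have h3 : Real.arsinh (μ * (a - x₀)) = -Real.arsinh (μ * (x₀ - a)) := by
    rw [← Real.arsinh_neg]
    ring_nf
  rw [h3, ← sub_div, div_mul_eq_mul_div]
  gcongr
  linarith

theorem integral_inv_sq_add_sq_le {c d μ α y₀ : ℝ} (hμ : 0 < μ) (hα : 0 < α) :
    ∫ y in c..d, (α ^ 2 + (μ * (y - y₀)) ^ 2)⁻¹ ≤ Real.pi / (μ * α) := by
  have hderiv : ∀ y, HasDerivAt (fun y => Real.arctan (μ / α * (y - y₀)) / (μ * α))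
      (α ^ 2 + (μ * (y - y₀)) ^ 2)⁻¹ y := by
    intro y
    have := ((((hasDerivAt_id y).sub_const y₀).const_mul (μ / α)).arctan).div_const (μ * α)
    refine this.congr_deriv ?_
    simp only [id]
    field_simp
  have hcont : Continuous fun y : ℝ => (α ^ 2 + (μ * (y - y₀)) ^ 2)⁻¹ :=
    Continuous.inv₀ (by fun_prop) (fun y => by positivity)
  rw [intervalIntegral.integral_eq_sub_of_hasDerivAt (fun y _ => hderiv y)
    (hcont.intervalIntegrable _ _), ← sub_div]
  gcongr
  linarith [Real.arctan_lt_pi_div_two (μ / α * (d - y₀)),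
    Real.neg_pi_div_two_lt_arctan (μ / α * (c - y₀))]

open MeasureTheory in
theorem setIntegral_Icc_prod_Icc_eq {E : Type*} [NormedAddCommGroup E] [NormedSpace ℝ E]
    {a b c d : ℝ} (hab : a ≤ b) (hcd : c ≤ d) {g : ℝ × ℝ → E}
    (hg : ContinuousOn g (Icc a b ×ˢ Icc c d)) :
    ∫ z in Icc a b ×ˢ Icc c d, g z = ∫ x in a..b, ∫ y in c..d, g (x, y) := by
  simp only [intervalIntegral.integral_of_le hab, intervalIntegral.integral_of_le hcd,
    ← integral_Icc_eq_integral_Ioc]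
  rw [Measure.volume_eq_prod]
  exact setIntegral_prod g (hg.integrableOn_compact (isCompact_Icc.prod isCompact_Icc))

theorem setIntegral_inv_one_add_sq_add_sq_le {a b c d μ x₀ y₀ : ℝ} (hab : a ≤ b) (hcd : c ≤ d)
    (hμ : 0 < μ) (hx₀ : x₀ ∈ Icc a b) :
    ∫ z in Icc a b ×ˢ Icc c d, (1 + (μ * (z.1 - x₀)) ^ 2 + (μ * (z.2 - y₀)) ^ 2)⁻¹ ≤
      2 * Real.pi / μ ^ 2 * Real.log (1 + 2 * μ * (b - a)) := by
  have hcont : Continuous fun z : ℝ × ℝ =>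
      (1 + (μ * (z.1 - x₀)) ^ 2 + (μ * (z.2 - y₀)) ^ 2)⁻¹ :=
    Continuous.inv₀ (by fun_prop) (fun y => by positivity)
  rw [setIntegral_Icc_prod_Icc_eq hab hcd hcont.continuousOn]
  have hsqrt : Continuous fun x : ℝ => (√(1 + (μ * (x - x₀)) ^ 2))⁻¹ :=
    Continuous.inv₀ (by fun_prop) (fun x => (Real.sqrt_pos.2 (by positivity)).ne')
  calc _ ≤ ∫ x in a..b, Real.pi / μ * (√(1 + (μ * (x - x₀)) ^ 2))⁻¹ := by
        refine intervalIntegral.integral_mono_on hab ?_ ?_ fun x _ => ?_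
        · exact (intervalIntegral.continuous_parametric_intervalIntegral_of_continuous'
            (by exact hcont) c d).intervalIntegrable a b
        · exact (hsqrt.const_mul _).intervalIntegrable a b
        · have h1 : 0 < 1 + (μ * (x - x₀)) ^ 2 := by positivity
          have := integral_inv_sq_add_sq_le (c := c) (d := d) (y₀ := y₀) hμ (Real.sqrt_pos.2 h1)
          rw [Real.sq_sqrt h1.le] at this
          refine this.trans_eq ?_
          field_simp
    _ ≤ Real.pi / μ * (2 / μ * Real.log (1 + 2 * μ * (b - a))) := by
        rw [intervalIntegral.integral_const_mul]
        have := Real.pi_pos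
        gcongr
        exact integral_inv_sqrt_one_add_sq_le hμ hx₀
    _ = _ := by field_simp

theorem abs_div_add_sq_add_sq_le {lam ρ u v t : ℝ} (hlam : 0 < lam)
    (hv : (ρ * lam * t) ^ 2 ≤ v ^ 2) :
    |u / (lam + u ^ 2 + v ^ 2)| ≤ (2 * √lam)⁻¹ * (√(1 + (ρ * √lam * t) ^ 2))⁻¹ := by
  have hN : 0 < lam + u ^ 2 + v ^ 2 := by positivity
  have h1 : 0 < 1 + (ρ * √lam * t) ^ 2 := by positivity
  have hl := Real.sq_sqrt hlam.le
  have hs := Real.sq_sqrt h1.le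
  have hsl : 0 < √lam := Real.sqrt_pos.2 hlam
  have hs0 : 0 < √(1 + (ρ * √lam * t) ^ 2) := Real.sqrt_pos.2 h1
  rw [abs_div, abs_of_pos hN, ← mul_inv, ← one_div, div_le_div_iff₀ hN (by positivity)]
  have h2 : (√lam * √(1 + (ρ * √lam * t) ^ 2)) ^ 2 = lam + (ρ * lam * t) ^ 2 := by
    rw [mul_pow, hl, hs]
    linear_combination (ρ ^ 2 * t ^ 2 * lam) * hl
  nlinarith [sq_nonneg (|u| - √lam * √(1 + (ρ * √lam * t) ^ 2)), sq_abs u]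

/-- Boundary contribution: along an edge one component of the gradient varies at rate `≫ λ`. -/
theorem integral_abs_div_add_sq_add_sq_le {a b κ ρ lam : ℝ} {u v v' : ℝ → ℝ} (hab : a ≤ b)
    (hlam : 0 < lam) (hρ : 0 < ρ) (hρκ : 2 * ρ ≤ κ) (hu : ContinuousOn u (Icc a b))
    (hv : ∀ t ∈ Icc a b, HasDerivAt v (v' t) t) (hv' : ∀ t ∈ Icc a b, κ * lam ≤ |v' t|) :
    ∫ t in a..b, |u t / (lam + u t ^ 2 + v t ^ 2)| ≤
      (ρ * lam)⁻¹ * Real.log (1 + 2 * (ρ * √lam) * (b - a)) := by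
  have hvc : ContinuousOn v (Icc a b) := fun t ht => (hv t ht).continuousAt.continuousWithinAt
  obtain ⟨t₀, ht₀, hmin⟩ := isCompact_Icc.exists_isMinOn (nonempty_Icc.2 hab) (hvc.pow 2)
  have hlow : ∀ t ∈ Icc a b, (ρ * lam * (t - t₀)) ^ 2 ≤ v t ^ 2 := by
    intro t ht
    obtain ⟨z, hz, hz'⟩ := domain_mvt
      (fun x hx => (hv x hx).hasFDerivAt.hasFDerivWithinAt) (convex_Icc a b) ht₀ ht
    have hzR := (convex_Icc a b).segment_subset ht₀ ht hz
    have hm : v t₀ ^ 2 ≤ v t ^ 2 := hmin ht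
    have h1 : v t - v t₀ = (t - t₀) * v' z := by simpa using hz'
    have h2 : (2 * ρ * lam) ^ 2 ≤ v' z ^ 2 := by
      rw [← sq_abs (v' z)]
      have := hv' z hzR
      have : 2 * ρ * lam ≤ κ * lam := by gcongr
      gcongr
      linarith
    have h3 := mul_le_mul_of_nonneg_left h2 (sq_nonneg (t - t₀))
    have h4 : (v t - v t₀) ^ 2 ≤ 4 * v t ^ 2 := by nlinarith [sq_nonneg (v t + v t₀)]
    rw [h1] at h4
    nlinarith
  have hsqrt : Continuous fun x : ℝ => (√(1 + (ρ * √lam * (x - t₀)) ^ 2))⁻¹ :=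
    Continuous.inv₀ (by fun_prop) (fun x => (Real.sqrt_pos.2 (by positivity)).ne')
  have hcont : ContinuousOn (fun t => |u t / (lam + u t ^ 2 + v t ^ 2)|) (Icc a b) :=
    (hu.div ((continuousOn_const.add (hu.pow 2)).add (hvc.pow 2))
      (fun t _ => by simp only [Pi.add_apply, Pi.pow_apply]; positivity)).abs
  have hsl : 0 < √lam := Real.sqrt_pos.2 hlam
  calc _ ≤ ∫ t in a..b, (2 * √lam)⁻¹ * (√(1 + (ρ * √lam * (t - t₀)) ^ 2))⁻¹ := by
        refine intervalIntegral.integral_mono_on hab ?_ ?_ fun t ht =>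
          abs_div_add_sq_add_sq_le hlam (hlow t ht)
        · exact hcont.intervalIntegrable_of_Icc hab
        · exact (hsqrt.const_mul _).intervalIntegrable a b
    _ ≤ (2 * √lam)⁻¹ * (2 / (ρ * √lam) * Real.log (1 + 2 * (ρ * √lam) * (b - a))) := by
        rw [intervalIntegral.integral_const_mul]
        gcongr
        exact integral_inv_sqrt_one_add_sq_le (by positivity) ht₀
    _ = _ := by
        rw [← mul_assoc]
        congr 1
        have := Real.mul_self_sqrt hlam.le
        field_simp
        nlinarith

theorem hasFDerivAt_div_add_sq_add_sq {u v : ℝ × ℝ → ℝ} {lam u₁ u₂ v₁ v₂ : ℝ} {z : ℝ × ℝ}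
    (hlam : 0 < lam) (hu : HasFDerivAt u (planeForm u₁ u₂) z)
    (hv : HasFDerivAt v (planeForm v₁ v₂) z) :
    HasFDerivAt (fun z => u z / (lam + u z ^ 2 + v z ^ 2))
      (planeForm
        ((u₁ * (lam + u z ^ 2 + v z ^ 2) - u z * (2 * u z * u₁ + 2 * v z * v₁)) /
          (lam + u z ^ 2 + v z ^ 2) ^ 2)
        ((u₂ * (lam + u z ^ 2 + v z ^ 2) - u z * (2 * u z * u₂ + 2 * v z * v₂)) /
          (lam + u z ^ 2 + v z ^ 2) ^ 2)) z := by
  have hN : lam + u z ^ 2 + v z ^ 2 ≠ 0 := by positivity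
  have h := hu.mul ((hasDerivAt_inv hN).comp_hasFDerivAt z
    (((hu.pow 2).const_add lam).add (hv.pow 2)))
  refine (h.congr_fderiv ?_).congr_of_eventuallyEq
    (Filter.Eventually.of_forall fun z => div_eq_mul_inv _ _)
  ext <;> simp <;> field_simp <;> ring

theorem hasFDerivAt_cexp_mul {F w : ℝ × ℝ → ℝ} {u v w₁ w₂ : ℝ} {z : ℝ × ℝ}
    (hF : HasFDerivAt F (planeForm u v) z) (hw : HasFDerivAt w (planeForm w₁ w₂) z) :
    HasFDerivAt (fun z => Complex.exp (Complex.I * (F z : ℂ)) * (w z : ℂ))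
      (Complex.exp (Complex.I * (F z : ℂ)) •
        ((Complex.I * (w z : ℂ)) • (Complex.ofRealCLM ∘L planeForm u v) +
          Complex.ofRealCLM ∘L planeForm w₁ w₂)) z := by
  have h1 : HasFDerivAt (fun z => (F z : ℂ)) (Complex.ofRealCLM ∘L planeForm u v) z :=
    Complex.ofRealCLM.hasFDerivAt.comp z hF
  have h2 : HasFDerivAt (fun z => (w z : ℂ)) (Complex.ofRealCLM ∘L planeForm w₁ w₂) z :=
    Complex.ofRealCLM.hasFDerivAt.comp z hw
  refine ((h1.const_mul Complex.I).cexp.mul h2).congr_fderiv ?_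
  ext <;> simp <;> ring

theorem abs_divergence_le {A B D u v lam M : ℝ} (hlam : 0 < lam)
    (hA : |A| ≤ M) (hB : |B| ≤ M) (hD : |D| ≤ M) :
    |(A * (lam + u ^ 2 + v ^ 2) - u * (2 * u * A + 2 * v * B)) / (lam + u ^ 2 + v ^ 2) ^ 2 +
      (D * (lam + v ^ 2 + u ^ 2) - v * (2 * v * D + 2 * u * B)) / (lam + v ^ 2 + u ^ 2) ^ 2| ≤
      6 * M / (lam + u ^ 2 + v ^ 2) := by
  have hM : 0 ≤ M := (abs_nonneg A).trans hA
  rw [add_right_comm lam (v ^ 2)]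
  set N := lam + u ^ 2 + v ^ 2 with hN
  have hN0 : 0 < N := by positivity
  rw [← add_div, abs_div, abs_of_pos (pow_pos hN0 2), div_le_div_iff₀ (by positivity) hN0]
  have h1 : |(A * N - u * (2 * u * A + 2 * v * B)) + (D * N - v * (2 * v * D + 2 * u * B))| ≤
      6 * M * N := by
    have e : (A * N - u * (2 * u * A + 2 * v * B)) + (D * N - v * (2 * v * D + 2 * u * B)) =
        A * (N - 2 * u ^ 2) + D * (N - 2 * v ^ 2) + B * (-4 * (u * v)) := by ring
    have a1 : |N - 2 * u ^ 2| ≤ N := abs_le.2 ⟨by nlinarith, by nlinarith⟩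
    have a2 : |N - 2 * v ^ 2| ≤ N := abs_le.2 ⟨by nlinarith, by nlinarith⟩
    have a3 : |-4 * (u * v)| ≤ 2 * N :=
      abs_le.2 ⟨by nlinarith [sq_nonneg (u - v)], by nlinarith [sq_nonneg (u + v)]⟩
    rw [e]
    calc _ ≤ |A| * |N - 2 * u ^ 2| + |D| * |N - 2 * v ^ 2| + |B| * |-4 * (u * v)| := by
          simp only [← abs_mul]
          exact abs_add_three _ _ _
      _ ≤ M * N + M * N + M * (2 * N) := by gcongr
      _ ≤ _ := by nlinarith
  calc _ ≤ 6 * M * N * N := by gcongr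
    _ = _ := by ring

section

variable {F u v A B D : ℝ × ℝ → ℝ} {a b c d κ K lam ρ : ℝ}

theorem HasHessianOn.setIntegral_div_add_sq_add_sq_le (hab : a ≤ b) (hcd : c ≤ d)
    (h : HasHessianOn u v A B D (Icc a b ×ˢ Icc c d))
    (hb : HessianBounds κ K lam A B D (Icc a b ×ˢ Icc c d))
    (hκ : 0 < κ) (hK : 0 < K) (hlam : 0 < lam) (hρ : 0 < ρ) (hρκ : 2 * ρ ≤ κ)
    (hρκ' : (2 * ρ) ^ 2 ≤ κ) (hρK : 8 * K * (2 * ρ) ≤ κ) :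
    ∫ z in Icc a b ×ˢ Icc c d, lam / (lam + u z ^ 2 + v z ^ 2) ≤
      2 * Real.pi / (ρ ^ 2 * lam) * Real.log (1 + 2 * (ρ * √lam) * (b - a)) := by
  have hu : ContinuousOn u (Icc a b ×ˢ Icc c d) :=
    fun z hz => (h.fst z hz).continuousAt.continuousWithinAt
  have hv : ContinuousOn v (Icc a b ×ˢ Icc c d) :=
    fun z hz => (h.snd z hz).continuousAt.continuousWithinAt
  have hcomp : IsCompact (Icc a b ×ˢ Icc c d) := isCompact_Icc.prod isCompact_Icc
  obtain ⟨p, hp, hmin⟩ := hcomp.exists_isMinOn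
    ((nonempty_Icc.2 hab).prod (nonempty_Icc.2 hcd)) ((hu.pow 2).add (hv.pow 2))
  have hsq : √lam ^ 2 = lam := Real.sq_sqrt hlam.le
  have hsl : 0 < √lam := Real.sqrt_pos.2 hlam
  have hpt : ∀ z ∈ Icc a b ×ˢ Icc c d, lam / (lam + u z ^ 2 + v z ^ 2) ≤
      (1 + (ρ * √lam * (z.1 - p.1)) ^ 2 + (ρ * √lam * (z.2 - p.2)) ^ 2)⁻¹ := by
    intro z hz
    have h1 := h.sq_dist_le hb hκ hK hlam (by positivity : 0 < 2 * ρ) hρκ hρκ' hρK hp hz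
    have h2 : u p ^ 2 + v p ^ 2 ≤ u z ^ 2 + v z ^ 2 := hmin hz
    have h3 : (ρ * lam) ^ 2 * ((z.1 - p.1) ^ 2 + (z.2 - p.2) ^ 2) ≤ u z ^ 2 + v z ^ 2 := by
      nlinarith [sq_nonneg (u z + u p), sq_nonneg (v z + v p)]
    rw [← one_div, div_le_div_iff₀ (by positivity) (by positivity)]
    simp only [mul_pow, hsq]
    nlinarith
  have hcont : ContinuousOn (fun z => lam / (lam + u z ^ 2 + v z ^ 2)) (Icc a b ×ˢ Icc c d) :=
    ContinuousOn.div continuousOn_const (by fun_prop) fun z _ => by positivity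
  have hcont' : Continuous fun z : ℝ × ℝ =>
      (1 + (ρ * √lam * (z.1 - p.1)) ^ 2 + (ρ * √lam * (z.2 - p.2)) ^ 2)⁻¹ :=
    Continuous.inv₀ (by fun_prop) (fun y => by positivity)
  refine (MeasureTheory.setIntegral_mono_on (hcont.integrableOn_compact hcomp)
    (hcont'.continuousOn.integrableOn_compact hcomp) hcomp.measurableSet hpt).trans ?_
  refine (setIntegral_inv_one_add_sq_add_sq_le hab hcd (by positivity) hp.1).trans_eq ?_
  rw [mul_pow, hsq]

/-- The two-dimensional second-derivative test for twice continuously differentiable phases. -/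
theorem HasHessianOn.norm_integral_cexp_le (hab : a ≤ b) (hcd : c ≤ d)
    (h : HasHessianOn u v A B D (Icc a b ×ˢ Icc c d))
    (hb : HessianBounds κ K lam A B D (Icc a b ×ˢ Icc c d))
    (hF : ∀ z ∈ Icc a b ×ˢ Icc c d, HasFDerivAt F (planeForm (u z) (v z)) z)
    (hκ : 0 < κ) (hK : 0 < K) (hlam : 0 < lam) (hρ : 0 < ρ) (hρκ : 2 * ρ ≤ κ)
    (hρκ' : (2 * ρ) ^ 2 ≤ κ) (hρK : 8 * K * (2 * ρ) ≤ κ) :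
    ‖∫ x in a..b, ∫ y in c..d, Complex.exp (Complex.I * (F (x, y) : ℂ))‖ ≤
      2 * ((ρ * lam)⁻¹ * Real.log (1 + 2 * (ρ * √lam) * (b - a))) +
      2 * ((ρ * lam)⁻¹ * Real.log (1 + 2 * (ρ * √lam) * (d - c))) +
      (1 + 6 * K) *
        (2 * Real.pi / (ρ ^ 2 * lam) * Real.log (1 + 2 * (ρ * √lam) * (b - a))) := by
  have hR : Icc (a, c) (b, d) = Icc a b ×ˢ Icc c d := (Icc_prod_Icc a b c d).symm
  have hcomp : IsCompact (Icc a b ×ˢ Icc c d) := isCompact_Icc.prod isCompact_Icc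
  have hu : ContinuousOn u (Icc a b ×ˢ Icc c d) :=
    fun z hz => (h.fst z hz).continuousAt.continuousWithinAt
  have hv : ContinuousOn v (Icc a b ×ˢ Icc c d) :=
    fun z hz => (h.snd z hz).continuousAt.continuousWithinAt
  have hFc : ContinuousOn F (Icc a b ×ˢ Icc c d) :=
    fun z hz => (hF z hz).continuousAt.continuousWithinAt
  have hN : ∀ z, lam + u z ^ 2 + v z ^ 2 ≠ 0 := fun z => by positivity
  have hN' : ∀ z, lam + v z ^ 2 + u z ^ 2 ≠ 0 := fun z => by positivity
  set E : ℝ × ℝ → ℂ := fun z => Complex.exp (Complex.I * (F z : ℂ)) with hE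
  have hEc : ContinuousOn E (Icc a b ×ˢ Icc c d) :=
    Complex.continuous_exp.comp_continuousOn
      (continuousOn_const.mul (Complex.continuous_ofReal.comp_continuousOn hFc))
  have hEn : ∀ z, ‖E z‖ = 1 := fun z => by
    change ‖Complex.exp (Complex.I * (F z : ℂ))‖ = 1
    rw [mul_comm]
    exact Complex.norm_exp_ofReal_mul_I _
  set W₁ : ℝ × ℝ → ℝ := fun z => u z / (lam + u z ^ 2 + v z ^ 2) with hW₁
  set W₂ : ℝ × ℝ → ℝ := fun z => v z / (lam + v z ^ 2 + u z ^ 2) with hW₂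
  set V : ℝ × ℝ → ℝ := fun z =>
    (A z * (lam + u z ^ 2 + v z ^ 2) - u z * (2 * u z * A z + 2 * v z * B z)) /
      (lam + u z ^ 2 + v z ^ 2) ^ 2 +
    (D z * (lam + v z ^ 2 + u z ^ 2) - v z * (2 * v z * D z + 2 * u z * B z)) /
      (lam + v z ^ 2 + u z ^ 2) ^ 2 with hV
  have hVc : ContinuousOn V (Icc a b ×ˢ Icc c d) := by
    have hA := h.continuousOn_fst
    have hB := h.continuousOn_mixed
    have hD := h.continuousOn_snd
    refine ContinuousOn.add (ContinuousOn.div ?_ ?_ fun z _ => pow_ne_zero 2 (hN z))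
      (ContinuousOn.div ?_ ?_ fun z _ => pow_ne_zero 2 (hN' z)) <;> fun_prop
  have hd₁ := fun z hz => hasFDerivAt_cexp_mul (hF z hz)
    (hasFDerivAt_div_add_sq_add_sq hlam (h.fst z hz) (h.snd z hz))
  have hd₂ := fun z hz => hasFDerivAt_cexp_mul (hF z hz)
    (hasFDerivAt_div_add_sq_add_sq hlam (h.snd z hz) (h.fst z hz))
  set Q : ℝ × ℝ → ℂ := fun z =>
    E z * (Complex.I * (1 - (lam / (lam + u z ^ 2 + v z ^ 2) : ℝ)) + (V z : ℂ)) with hQ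
  have hLc : ContinuousOn (fun z => lam / (lam + u z ^ 2 + v z ^ 2)) (Icc a b ×ˢ Icc c d) :=
    ContinuousOn.div continuousOn_const (by fun_prop) fun z _ => hN z
  have hQc : ContinuousOn Q (Icc a b ×ˢ Icc c d) := by
    refine hEc.mul ((continuousOn_const.mul (continuousOn_const.sub ?_)).add ?_)
    · exact Complex.continuous_ofReal.comp_continuousOn hLc
    · exact Complex.continuous_ofReal.comp_continuousOn hVc
  have hsub : Ioo a b ×ˢ Ioo c d ⊆ Icc a b ×ˢ Icc c d :=
    prod_mono Ioo_subset_Icc_self Ioo_subset_Icc_self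
  have hdiv := MeasureTheory.integral_divergence_prod_Icc_of_hasFDerivAt_of_le
    (fun z => E z * (W₁ z : ℂ)) (fun z => E z * (W₂ z : ℂ)) _ _ (a, c) (b, d) ⟨hab, hcd⟩
    (by rw [hR]; exact fun z hz => (hd₁ z hz).continuousAt.continuousWithinAt)
    (by rw [hR]; exact fun z hz => (hd₂ z hz).continuousAt.continuousWithinAt)
    (fun z hz => hd₁ z (hsub hz)) (fun z hz => hd₂ z (hsub hz))
  have hQeq : ∀ z, (Complex.exp (Complex.I * (F z : ℂ)) •
        ((Complex.I * ((u z / (lam + u z ^ 2 + v z ^ 2) : ℝ) : ℂ)) •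
            (Complex.ofRealCLM ∘L planeForm (u z) (v z)) +
          Complex.ofRealCLM ∘L planeForm
            ((A z * (lam + u z ^ 2 + v z ^ 2) - u z * (2 * u z * A z + 2 * v z * B z)) /
              (lam + u z ^ 2 + v z ^ 2) ^ 2)
            ((B z * (lam + u z ^ 2 + v z ^ 2) - u z * (2 * u z * B z + 2 * v z * D z)) /
              (lam + u z ^ 2 + v z ^ 2) ^ 2))) (1, 0) +
      (Complex.exp (Complex.I * (F z : ℂ)) •
        ((Complex.I * ((v z / (lam + v z ^ 2 + u z ^ 2) : ℝ) : ℂ)) •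
            (Complex.ofRealCLM ∘L planeForm (u z) (v z)) +
          Complex.ofRealCLM ∘L planeForm
            ((B z * (lam + v z ^ 2 + u z ^ 2) - v z * (2 * v z * B z + 2 * u z * A z)) /
              (lam + v z ^ 2 + u z ^ 2) ^ 2)
            ((D z * (lam + v z ^ 2 + u z ^ 2) - v z * (2 * v z * D z + 2 * u z * B z)) /
              (lam + v z ^ 2 + u z ^ 2) ^ 2))) (0, 1) = Q z := by
    intro z
    have e : u z / (lam + u z ^ 2 + v z ^ 2) * u z + v z / (lam + v z ^ 2 + u z ^ 2) * v z =
        1 - lam / (lam + u z ^ 2 + v z ^ 2) := by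
      have := hN z
      have := hN' z
      rw [add_right_comm lam (v z ^ 2)]
      field_simp
      ring
    have e' : ((u z / (lam + u z ^ 2 + v z ^ 2) : ℝ) : ℂ) * u z +
        ((v z / (lam + v z ^ 2 + u z ^ 2) : ℝ) : ℂ) * v z =
          1 - (lam / (lam + u z ^ 2 + v z ^ 2) : ℝ) := by
      exact_mod_cast e
    simp only [hQ, ← e', hV, hE, smul_apply, add_apply,
      ContinuousLinearMap.comp_apply, planeForm_apply, mul_one, mul_zero, add_zero, zero_add,
      Complex.ofRealCLM_apply, smul_eq_mul, Complex.ofReal_add]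
    ring
  simp only [hQeq, hR] at hdiv
  have hdiv := hdiv (hQc.integrableOn_compact hcomp)
  have hLint := h.setIntegral_div_add_sq_add_sq_le hab hcd hb hκ hK hlam hρ hρκ hρκ' hρK
  rw [← setIntegral_Icc_prod_Icc_eq hab hcd hEc]
  set G : ℝ × ℝ → ℂ := fun z =>
    E z * ((lam / (lam + u z ^ 2 + v z ^ 2) : ℝ) + Complex.I * (V z : ℂ)) with hG
  have hEG : ∀ z, E z = -Complex.I * Q z + G z := by
    intro z
    simp only [hQ, hG]
    linear_combination (E z * (1 - (lam / (lam + u z ^ 2 + v z ^ 2) : ℝ))) * Complex.I_sq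
  have hGc : ContinuousOn G (Icc a b ×ˢ Icc c d) :=
    hEc.mul ((Complex.continuous_ofReal.comp_continuousOn hLc).add
      (continuousOn_const.mul (Complex.continuous_ofReal.comp_continuousOn hVc)))
  have hGle : ∀ z ∈ Icc a b ×ˢ Icc c d,
      ‖G z‖ ≤ (1 + 6 * K) * (lam / (lam + u z ^ 2 + v z ^ 2)) := by
    intro z hz
    have h1 := abs_divergence_le (u := u z) (v := v z) hlam (hb.fst_le z hz)
      (hb.mixed_le z hz) (hb.snd_le z hz)
    have h2 : 0 ≤ lam / (lam + u z ^ 2 + v z ^ 2) := by positivity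
    rw [hG, norm_mul, hEn, one_mul]
    refine (norm_add_le _ _).trans ?_
    rw [norm_mul, Complex.norm_I, one_mul, Complex.norm_real, Complex.norm_real,
      Real.norm_of_nonneg h2, Real.norm_eq_abs]
    refine (add_le_add_right h1 _).trans_eq ?_
    ring
  have hGint : ‖∫ z in Icc a b ×ˢ Icc c d, G z‖ ≤
      (1 + 6 * K) * ∫ z in Icc a b ×ˢ Icc c d, lam / (lam + u z ^ 2 + v z ^ 2) := by
    rw [← MeasureTheory.integral_const_mul]
    refine MeasureTheory.norm_integral_le_of_norm_le
      ((hLc.integrableOn_compact hcomp).const_mul _) ?_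
    exact (MeasureTheory.ae_restrict_iff' hcomp.measurableSet).2
      (Filter.Eventually.of_forall hGle)
  have hmemx : ∀ y ∈ Icc c d, MapsTo (fun x : ℝ => (x, y)) (Icc a b) (Icc a b ×ˢ Icc c d) :=
    fun y hy x hx => ⟨hx, hy⟩
  have hmemy : ∀ x ∈ Icc a b, MapsTo (fun y : ℝ => (x, y)) (Icc c d) (Icc a b ×ˢ Icc c d) :=
    fun x hx y hy => ⟨hx, hy⟩
  have hedge₁ : ∀ x ∈ Icc a b, ‖∫ y in c..d, E (x, y) * (W₁ (x, y) : ℂ)‖ ≤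
      (ρ * lam)⁻¹ * Real.log (1 + 2 * (ρ * √lam) * (d - c)) := by
    intro x hx
    refine (intervalIntegral.norm_integral_le_integral_norm hcd).trans ?_
    simp only [norm_mul, hEn, one_mul, Complex.norm_real, Real.norm_eq_abs]
    refine integral_abs_div_add_sq_add_sq_le (v' := fun y => D (x, y)) hcd hlam hρ hρκ
      (hu.comp (by fun_prop) (hmemy x hx)) (fun y hy => ?_)
      (fun y hy => hb.le_snd _ (hmemy x hx hy))
    have := (h.snd _ (hmemy x hx hy)).comp_hasDerivAt y
      ((hasDerivAt_const y x).prodMk (hasDerivAt_id y))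
    exact this.congr_deriv (by simp)
  have hedge₂ : ∀ y ∈ Icc c d, ‖∫ x in a..b, E (x, y) * (W₂ (x, y) : ℂ)‖ ≤
      (ρ * lam)⁻¹ * Real.log (1 + 2 * (ρ * √lam) * (b - a)) := by
    intro y hy
    refine (intervalIntegral.norm_integral_le_integral_norm hab).trans ?_
    simp only [norm_mul, hEn, one_mul, Complex.norm_real, Real.norm_eq_abs]
    refine integral_abs_div_add_sq_add_sq_le (v' := fun x => A (x, y)) hab hlam hρ hρκ
      (hv.comp (by fun_prop) (hmemx y hy)) (fun x hx => ?_)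
      (fun x hx => hb.le_fst _ (hmemx y hy hx))
    have := (h.fst _ (hmemx y hy hx)).comp_hasDerivAt x
      ((hasDerivAt_id x).prodMk (hasDerivAt_const x y))
    exact this.congr_deriv (by simp)
  have hsplit : ∫ z in Icc a b ×ˢ Icc c d, E z =
      -Complex.I * (∫ z in Icc a b ×ˢ Icc c d, Q z) + ∫ z in Icc a b ×ˢ Icc c d, G z := by
    rw [← MeasureTheory.integral_const_mul, ← MeasureTheory.integral_add
      ((hQc.integrableOn_compact hcomp).const_mul _) (hGc.integrableOn_compact hcomp)]
    exact MeasureTheory.integral_congr_ae (Filter.Eventually.of_forall hEG)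
  rw [hsplit, hdiv]
  refine (norm_add_le _ _).trans (add_le_add ?_ (hGint.trans ?_))
  · rw [norm_mul, norm_neg, Complex.norm_I, one_mul]
    refine (norm_sub_le _ _).trans ?_
    refine (add_le_add_left (norm_add_le _ _) _).trans ?_
    refine (add_le_add_left (add_le_add_left (norm_sub_le _ _) _) _).trans ?_
    linarith [hedge₁ a (left_mem_Icc.2 hab), hedge₁ b (right_mem_Icc.2 hab),
      hedge₂ c (left_mem_Icc.2 hcd), hedge₂ d (right_mem_Icc.2 hcd)]
  · gcongr

end

section

variable {F : ℝ × ℝ → ℝ} {U : Set (ℝ × ℝ)} {p : ℝ × ℝ}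

theorem hasFDerivAt_planeForm (hF : DifferentiableAt ℝ F p) :
    HasFDerivAt F (planeForm (fderiv ℝ F p (1, 0)) (fderiv ℝ F p (0, 1))) p := by
  refine hF.hasFDerivAt.congr_fderiv ?_
  ext <;> simp

theorem DifferentiableAt.hasDerivAt_fst_slice (hF : DifferentiableAt ℝ F p) :
    HasDerivAt (fun t => F (t, p.2)) (fderiv ℝ F p (1, 0)) p.1 :=
  hF.hasFDerivAt.comp_hasDerivAt p.1 ((hasDerivAt_id p.1).prodMk (hasDerivAt_const p.1 p.2))

theorem DifferentiableAt.hasDerivAt_snd_slice (hF : DifferentiableAt ℝ F p) :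
    HasDerivAt (fun t => F (p.1, t)) (fderiv ℝ F p (0, 1)) p.2 :=
  hF.hasFDerivAt.comp_hasDerivAt p.2 ((hasDerivAt_const p.2 p.1).prodMk (hasDerivAt_id p.2))

theorem eventually_fst_slice_mem (hU : IsOpen U) (hp : p ∈ U) : ∀ᶠ t in nhds p.1, (t, p.2) ∈ U :=
  (Continuous.prodMk_left p.2).continuousAt.eventually (hU.mem_nhds hp)

theorem eventually_snd_slice_mem (hU : IsOpen U) (hp : p ∈ U) : ∀ᶠ t in nhds p.2, (p.1, t) ∈ U :=
  (Continuous.prodMk_right p.1).continuousAt.eventually (hU.mem_nhds hp)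

theorem ContDiffOn.contDiffOn_fderiv_apply {F : ℝ × ℝ → ℝ} {U : Set (ℝ × ℝ)} {m n : WithTop ℕ∞}
    (hF : ContDiffOn ℝ n F U) (hU : IsOpen U) (hmn : m + 1 ≤ n) (e : ℝ × ℝ) :
    ContDiffOn ℝ m (fun z => fderiv ℝ F z e) U :=
  (hF.fderiv_of_isOpen hU hmn).clm_apply contDiffOn_const

theorem ContDiffOn.deriv_deriv_fst_slice (hF : ContDiffOn ℝ 2 F U) (hU : IsOpen U) (hp : p ∈ U) :
    deriv (deriv fun t => F (t, p.2)) p.1 =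
      fderiv ℝ (fun z => fderiv ℝ F z (1, 0)) p (1, 0) := by
  have h1 : deriv (fun t => F (t, p.2)) =ᶠ[nhds p.1] fun t => fderiv ℝ F (t, p.2) (1, 0) := by
    filter_upwards [eventually_fst_slice_mem hU hp] with t ht
    exact (((hF.differentiableOn two_ne_zero).differentiableAt
      (hU.mem_nhds ht)).hasDerivAt_fst_slice).deriv
  rw [h1.deriv_eq]
  exact (((hF.contDiffOn_fderiv_apply hU one_add_one_eq_two.le (1, 0)).differentiableOn
    one_ne_zero).differentiableAt (hU.mem_nhds hp)).hasDerivAt_fst_slice.deriv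

theorem ContDiffOn.deriv_deriv_snd_slice (hF : ContDiffOn ℝ 2 F U) (hU : IsOpen U) (hp : p ∈ U) :
    deriv (deriv fun t => F (p.1, t)) p.2 =
      fderiv ℝ (fun z => fderiv ℝ F z (0, 1)) p (0, 1) := by
  have h1 : deriv (fun t => F (p.1, t)) =ᶠ[nhds p.2] fun t => fderiv ℝ F (p.1, t) (0, 1) := by
    filter_upwards [eventually_snd_slice_mem hU hp] with t ht
    exact (((hF.differentiableOn two_ne_zero).differentiableAt
      (hU.mem_nhds ht)).hasDerivAt_snd_slice).deriv
  rw [h1.deriv_eq]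
  exact (((hF.contDiffOn_fderiv_apply hU one_add_one_eq_two.le (0, 1)).differentiableOn
    one_ne_zero).differentiableAt (hU.mem_nhds hp)).hasDerivAt_snd_slice.deriv

theorem ContDiffOn.deriv_deriv_mixed_slice (hF : ContDiffOn ℝ 2 F U) (hU : IsOpen U)
    (hp : p ∈ U) :
    deriv (fun t => deriv (fun s => F (t, s)) p.2) p.1 =
      fderiv ℝ (fun z => fderiv ℝ F z (0, 1)) p (1, 0) := by
  have h1 : (fun t => deriv (fun s => F (t, s)) p.2) =ᶠ[nhds p.1]
      fun t => fderiv ℝ F (t, p.2) (0, 1) := by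
    filter_upwards [eventually_fst_slice_mem hU hp] with t ht
    exact (((hF.differentiableOn two_ne_zero).differentiableAt
      (hU.mem_nhds ht)).hasDerivAt_snd_slice).deriv
  rw [h1.deriv_eq]
  exact (((hF.contDiffOn_fderiv_apply hU one_add_one_eq_two.le (0, 1)).differentiableOn
    one_ne_zero).differentiableAt (hU.mem_nhds hp)).hasDerivAt_fst_slice.deriv

theorem ContDiffOn.fderiv_fderiv_comm (hF : ContDiffOn ℝ 2 F U) (hU : IsOpen U) (hp : p ∈ U)
    (x y : ℝ × ℝ) :
    fderiv ℝ (fun z => fderiv ℝ F z x) p y = fderiv ℝ (fun z => fderiv ℝ F z y) p x := by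
  have hsymm := (hF.contDiffAt (hU.mem_nhds hp)).isSymmSndFDerivAt
    minSmoothness_of_isRCLikeNormedField.le
  have hd : DifferentiableAt ℝ (fderiv ℝ F) p :=
    ((hF.fderiv_of_isOpen hU one_add_one_eq_two.le).differentiableOn
      one_ne_zero).differentiableAt (hU.mem_nhds hp)
  have h1 : ∀ x y, fderiv ℝ (fun z => fderiv ℝ F z x) p y = fderiv ℝ (fderiv ℝ F) p y x := by
    intro x y
    rw [fderiv_clm_apply hd (differentiableAt_const x)]
    simp
  rw [h1, h1]
  exact hsymm y x

theorem ContDiffOn.hasHessianOn (hF : ContDiffOn ℝ 2 F U) (hU : IsOpen U) {R : Set (ℝ × ℝ)}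
    (hR : R ⊆ U) :
    HasHessianOn (fun z => fderiv ℝ F z (1, 0)) (fun z => fderiv ℝ F z (0, 1))
      (fun p => fderiv ℝ (fun z => fderiv ℝ F z (1, 0)) p (1, 0))
      (fun p => fderiv ℝ (fun z => fderiv ℝ F z (0, 1)) p (1, 0))
      (fun p => fderiv ℝ (fun z => fderiv ℝ F z (0, 1)) p (0, 1)) R := by
  have h1 := hF.contDiffOn_fderiv_apply hU one_add_one_eq_two.le
  have hd : ∀ e, ∀ z ∈ R, DifferentiableAt ℝ (fun z => fderiv ℝ F z e) z := fun e z hz =>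
    ((h1 e).differentiableOn one_ne_zero).differentiableAt (hU.mem_nhds (hR hz))
  have hc : ∀ e e', ContinuousOn (fun p => fderiv ℝ (fun z => fderiv ℝ F z e) p e') R :=
    fun e e' => (((h1 e).contDiffOn_fderiv_apply hU (zero_add 1).le e').continuousOn).mono hR
  refine ⟨fun p hp => ?_, fun p hp => hasFDerivAt_planeForm (hd _ p hp), hc _ _, hc _ _, hc _ _⟩
  rw [← hF.fderiv_fderiv_comm hU (hR hp) (1, 0) (0, 1)]
  exact hasFDerivAt_planeForm (hd _ p hp)

end

theorem Real.log_one_add_le_log_two_add_abs_log {x : ℝ} (hx : 0 < x) :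
    Real.log (1 + x) ≤ Real.log 2 + |Real.log x| := by
  rcases le_total x 1 with h | h
  · have := Real.log_le_log (by positivity) (by linarith : 1 + x ≤ 2)
    linarith [abs_nonneg (Real.log x)]
  · have := Real.log_le_log (by positivity) (by linarith : 1 + x ≤ 2 * x)
    rw [Real.log_mul two_ne_zero hx.ne'] at this
    linarith [le_abs_self (Real.log x)]

theorem Real.log_one_add_two_mul_le {ρ lam ℓ : ℝ} (hρ : 0 < ρ) (hlam : 0 < lam) (hℓ : 0 < ℓ) :
    Real.log (1 + 2 * (ρ * √lam) * ℓ) ≤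
      (1 + |Real.log (2 * ρ)|) * (1 + |Real.log ℓ| + |Real.log lam|) := by
  have hs : 0 < √lam := Real.sqrt_pos.2 hlam
  have h1 := Real.log_one_add_le_log_two_add_abs_log (by positivity : 0 < 2 * (ρ * √lam) * ℓ)
  have h2 : Real.log (2 * (ρ * √lam) * ℓ) = Real.log (2 * ρ) + Real.log lam / 2 + Real.log ℓ := by
    rw [← mul_assoc, Real.log_mul (by positivity) hℓ.ne', Real.log_mul (by positivity) hs.ne',
      Real.log_sqrt hlam.le]
  have h3 := abs_add_three (Real.log (2 * ρ)) (Real.log lam / 2) (Real.log ℓ)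
  rw [abs_div, abs_two] at h3
  rw [h2] at h1
  have h4 : Real.log 2 ≤ 1 := by linarith [Real.log_le_sub_one_of_pos (zero_lt_two' ℝ)]
  have h5 := abs_nonneg (Real.log lam)
  nlinarith [mul_nonneg (abs_nonneg (Real.log (2 * ρ)))
    (add_nonneg (abs_nonneg (Real.log ℓ)) h5)]

/-- the two-dimensional second-derivative test, Lemma 2.7 of the
paper.  For every `n ≥ 1` and `0 < κ ≤ K` there is `C > 0` such that whenever
`f` is a real-valued phase, twice continuously differentiable on an open
neighbourhood of the rectangle `D = [a,b] × [c,d]`, algebraic of degree at most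
`n` over `D`, whose pure second partials have size `≍ λ`, whose mixed second
partial is `O(λ)`, and whose Hessian determinant is `≫ λ²` throughout `D`, then
`|∬_D e^{i f}| ≤ C·(1 + |log(b-a)| + |log(d-c)| + |log λ|)/λ`. -/
theorem stmt_7 (n : ℕ) (hn : 1 ≤ n) (κ K : ℝ) (hκ : 0 < κ) (hκK : κ ≤ K) :
    ∃ C : ℝ, 0 < C ∧ ∀ (a b c d lam : ℝ) (f : ℝ → ℝ → ℝ),
      a < b → c < d → 0 < lam →
      (∃ U : Set (ℝ × ℝ), IsOpen U ∧ Set.Icc a b ×ˢ Set.Icc c d ⊆ U ∧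
        ContDiffOn ℝ 2 (fun p : ℝ × ℝ => f p.1 p.2) U) →
      (∃ P : MvPolynomial (Fin 3) ℝ, P ≠ 0 ∧ P.totalDegree ≤ n ∧
        ∀ x₁ ∈ Set.Icc a b, ∀ x₂ ∈ Set.Icc c d,
          MvPolynomial.eval ![x₁, x₂, f x₁ x₂] P = 0) →
      (∀ x₁ ∈ Set.Icc a b, ∀ x₂ ∈ Set.Icc c d,
        (κ * lam ≤ |deriv (deriv (fun t : ℝ => f t x₂)) x₁| ∧
          |deriv (deriv (fun t : ℝ => f t x₂)) x₁| ≤ K * lam) ∧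
        (κ * lam ≤ |deriv (deriv (f x₁)) x₂| ∧
          |deriv (deriv (f x₁)) x₂| ≤ K * lam) ∧
        |deriv (fun t : ℝ => deriv (f t) x₂) x₁| ≤ K * lam ∧
        κ * lam ^ 2 ≤
          |deriv (deriv (fun t : ℝ => f t x₂)) x₁ * deriv (deriv (f x₁)) x₂ -
            (deriv (fun t : ℝ => deriv (f t) x₂) x₁) ^ 2|) →
      ‖∫ x₁ in a..b, ∫ x₂ in c..d, Complex.exp (Complex.I * (f x₁ x₂ : ℂ))‖
        ≤ C * (1 + |Real.log (b - a)| + |Real.log (d - c)| + |Real.log lam|) / lam := by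
  have hK : 0 < K := hκ.trans_le hκK
  obtain ⟨ρ, hρ, hρκ, hρκ', hρK⟩ :
      ∃ ρ : ℝ, 0 < ρ ∧ 2 * ρ ≤ κ ∧ (2 * ρ) ^ 2 ≤ κ ∧ 8 * K * (2 * ρ) ≤ κ := by
    refine ⟨min (κ / 2) (min (√κ / 2) (κ / (16 * K))), by positivity, ?_, ?_, ?_⟩
    · linarith [min_le_left (κ / 2) (min (√κ / 2) (κ / (16 * K)))]
    · have h1 : 2 * min (κ / 2) (min (√κ / 2) (κ / (16 * K))) ≤ √κ := by
        linarith [min_le_right (κ / 2) (min (√κ / 2) (κ / (16 * K))),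
          min_le_left (√κ / 2) (κ / (16 * K))]
      calc _ ≤ √κ ^ 2 := by gcongr
        _ = κ := Real.sq_sqrt hκ.le
    · have h1 : min (κ / 2) (min (√κ / 2) (κ / (16 * K))) ≤ κ / (16 * K) :=
        (min_le_right _ _).trans (min_le_right _ _)
      rw [le_div_iff₀ (by positivity)] at h1
      linarith
  have hπ := Real.pi_pos
  refine ⟨(4 / ρ + (1 + 6 * K) * (2 * Real.pi / ρ ^ 2)) * (1 + |Real.log (2 * ρ)|),
    by positivity, ?_⟩
  rintro a b c d lam f hab hcd hlam ⟨U, hU, hRU, hF⟩ - hbd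
  have hb : HessianBounds κ K lam
      (fun p => fderiv ℝ (fun z => fderiv ℝ (fun p : ℝ × ℝ => f p.1 p.2) z (1, 0)) p (1, 0))
      (fun p => fderiv ℝ (fun z => fderiv ℝ (fun p : ℝ × ℝ => f p.1 p.2) z (0, 1)) p (1, 0))
      (fun p => fderiv ℝ (fun z => fderiv ℝ (fun p : ℝ × ℝ => f p.1 p.2) z (0, 1)) p (0, 1))
      (Icc a b ×ˢ Icc c d) := by
    have hA := fun p hp => hF.deriv_deriv_fst_slice hU (p := p) (hRU hp)
    have hB := fun p hp => hF.deriv_deriv_mixed_slice hU (p := p) (hRU hp)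
    have hD := fun p hp => hF.deriv_deriv_snd_slice hU (p := p) (hRU hp)
    constructor <;> intro p hp <;> obtain ⟨⟨h1, h2⟩, ⟨h3, h4⟩, h5, h6⟩ := hbd p.1 hp.1 p.2 hp.2
    · simpa only [← hA p hp] using h1
    · simpa only [← hA p hp] using h2
    · simpa only [← hD p hp] using h3
    · simpa only [← hD p hp] using h4
    · simpa only [← hB p hp] using h5
    · simpa only [← hA p hp, ← hB p hp, ← hD p hp] using h6
  have key := (hF.hasHessianOn hU hRU).norm_integral_cexp_le hab.le hcd.le hb
    (fun z hz => hasFDerivAt_planeForm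
      ((hF.differentiableOn two_ne_zero).differentiableAt (hU.mem_nhds (hRU hz))))
    hκ hK hlam hρ hρκ hρκ' hρK
  refine key.trans ?_
  set T := 1 + |Real.log (b - a)| + |Real.log (d - c)| + |Real.log lam| with hT
  have hab' : Real.log (1 + 2 * (ρ * √lam) * (b - a)) ≤ (1 + |Real.log (2 * ρ)|) * T := by
    refine (Real.log_one_add_two_mul_le hρ hlam (sub_pos.2 hab)).trans ?_
    gcongr
    linarith [abs_nonneg (Real.log (d - c))]
  have hcd' : Real.log (1 + 2 * (ρ * √lam) * (d - c)) ≤ (1 + |Real.log (2 * ρ)|) * T := by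
    refine (Real.log_one_add_two_mul_le hρ hlam (sub_pos.2 hcd)).trans ?_
    gcongr
    linarith [abs_nonneg (Real.log (b - a))]
  calc _ ≤ 2 * ((ρ * lam)⁻¹ * ((1 + |Real.log (2 * ρ)|) * T)) +
        2 * ((ρ * lam)⁻¹ * ((1 + |Real.log (2 * ρ)|) * T)) +
        (1 + 6 * K) * (2 * Real.pi / (ρ ^ 2 * lam) * ((1 + |Real.log (2 * ρ)|) * T)) := by
        gcongr
    _ = _ := by
        field_simp
        ring
end
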